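/- arXiv:0904.2547 — 3 statements merged into one kernel-verified Lean document; each statement's English description precedes it below -/
import Mathlib

section
/- Let γ > 0, let T ∈ (0,∞), and let u be a periodic classical solution of the Ostrovsky–Hunter equation on [0,T) with initial data u₀ satisfying ∫₀¹ u₀(x) dx = 0, which is in addition three times continuously differentiable in x, and suppose that lim_{t↑T} inf_{x∈ℝ} u_x(t,x) = −∞. Then the blow-up rate satisfies lim_{t↑T} ( (T−t) · inf_{x∈ℝ} u_x(t,x) ) = −1. -/
open MeasureTheory Filter Set intervalIntegral

/-- A periodic (period `1` in `x`) classical solution of the Ostrovsky–Hunter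
equation `(u_t + u u_x)_x = γ u` on the set `S` of times (typically `[0,T)`):
`u` is `1`-periodic in `x`, continuously differentiable in `t`, twice
continuously differentiable in `x`, with `u_tx` continuous, and the expanded
equation `u_tx + u_x² + u u_xx = γ u` holds pointwise at positive times of `S`. -/
structure IsPeriodicOHSolution (γ : ℝ) (S : Set ℝ) (u : ℝ → ℝ → ℝ) : Prop where
  periodic : ∀ t ∈ S, ∀ x : ℝ, u t (x + 1) = u t x
  diff_t : ∀ t ∈ S, ∀ x : ℝ, DifferentiableAt ℝ (fun s => u s x) t
  diff_x : ∀ t ∈ S, ∀ x : ℝ, DifferentiableAt ℝ (u t) x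
  diff_xx : ∀ t ∈ S, ∀ x : ℝ, DifferentiableAt ℝ (deriv (u t)) x
  diff_tx : ∀ t ∈ S, ∀ x : ℝ, DifferentiableAt ℝ (fun y => deriv (fun s => u s y) t) x
  cont_u : ContinuousOn (fun p : ℝ × ℝ => u p.1 p.2) (S ×ˢ (Set.univ : Set ℝ))
  cont_ut : ContinuousOn (fun p : ℝ × ℝ => deriv (fun s => u s p.2) p.1)
      (S ×ˢ (Set.univ : Set ℝ))
  cont_ux : ContinuousOn (fun p : ℝ × ℝ => deriv (u p.1) p.2) (S ×ˢ (Set.univ : Set ℝ))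
  cont_uxx : ContinuousOn (fun p : ℝ × ℝ => deriv (deriv (u p.1)) p.2)
      (S ×ˢ (Set.univ : Set ℝ))
  cont_utx : ContinuousOn (fun p : ℝ × ℝ => deriv (fun y => deriv (fun s => u s y) p.1) p.2)
      (S ×ˢ (Set.univ : Set ℝ))
  eqn : ∀ t ∈ S, 0 < t → ∀ x : ℝ,
    deriv (fun y => deriv (fun s => u s y) t) x
      + (deriv (u t) x) ^ 2 + u t x * deriv (deriv (u t)) x = γ * u t x

open Topology


/-- Maximum principle barrier. -/
theorem oh_barrier (g : ℝ → ℝ → ℝ) (a b : ℝ)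
    (hper : ∀ t ∈ Set.Icc a b, ∀ x, g t (x + 1) = g t x)
    (hc : ContinuousOn (fun p : ℝ × ℝ => g p.1 p.2) (Set.Icc a b ×ˢ Set.univ))
    (hinit : ∀ x, g a x < 0)
    (hd : ∀ t ∈ Set.Ioc a b, ∀ x, g t x = 0 → (∀ y, g t y ≤ 0) →
      ∃ d < 0, HasDerivAt (fun s => g s x) d t) :
    ∀ t ∈ Set.Icc a b, ∀ x, g t x < 0 := by
  by_contra hcon
  push Not at hcon
  obtain ⟨t1, ht1, x1, hx1⟩ := hcon
  have hred : ∀ t ∈ Set.Icc a b, ∀ x, ∃ y ∈ Set.Icc (0:ℝ) 1, g t x = g t y := by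
    intro t ht x
    obtain ⟨y, hy, he⟩ := Function.Periodic.exists_mem_Ico₀ (f := g t) (c := 1)
      (fun x => hper t ht x) one_pos x
    exact ⟨y, ⟨hy.1, hy.2.le⟩, he⟩
  set K : Set (ℝ × ℝ) := (Set.Icc a b ×ˢ Set.Icc (0:ℝ) 1) ∩ {p | 0 ≤ g p.1 p.2} with hK
  have hKc : IsCompact K := by
    have h1 : IsCompact (Set.Icc a b ×ˢ Set.Icc (0:ℝ) 1) := isCompact_Icc.prod isCompact_Icc
    have h2 : IsClosed K := by
      have hc' : ContinuousOn (fun p : ℝ × ℝ => g p.1 p.2) (Set.Icc a b ×ˢ Set.Icc (0:ℝ) 1) :=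
        hc.mono (Set.prod_mono le_rfl (Set.subset_univ _))
      exact hc'.preimage_isClosed_of_isClosed h1.isClosed isClosed_Ici
    exact h1.of_isClosed_subset h2 Set.inter_subset_left
  have hKne : K.Nonempty := by
    obtain ⟨y, hy, he⟩ := hred t1 ht1 x1
    exact ⟨(t1, y), ⟨ht1, hy⟩, by simpa [← he] using hx1⟩
  obtain ⟨⟨t0, x0⟩, ⟨⟨ht0, hx0⟩, hg0⟩, hmin⟩ := hKc.exists_isMinOn hKne continuous_fst.continuousOn
  simp only [Set.mem_ofPred_eq] at hg0
  have ht0' : t0 ∈ Set.Icc a b := ht0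
  have hat : a < t0 := by
    rcases eq_or_lt_of_le ht0'.1 with h | h
    · exact absurd hg0 (by rw [← h]; exact not_le.mpr (hinit x0))
    · exact h
  have hneg : ∀ s ∈ Set.Ico a t0, ∀ x, g s x < 0 := by
    intro s hs x
    by_contra hge
    push Not at hge
    have hsI : s ∈ Set.Icc a b := ⟨hs.1, hs.2.le.trans ht0'.2⟩
    obtain ⟨y, hy, he⟩ := hred s hsI x
    have : (s, y) ∈ K := ⟨⟨hsI, hy⟩, by simpa [← he] using hge⟩
    have := hmin this
    simp only [Set.mem_ofPred_eq] at this
    linarith [hs.2]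
  have hle : ∀ y, g t0 y ≤ 0 := by
    intro y
    have hcy : ContinuousOn (fun s => g s y) (Set.Icc a b) := by
      have : ContinuousOn (fun s : ℝ => ((s, y) : ℝ × ℝ)) (Set.Icc a b) := by fun_prop
      exact hc.comp this (fun s hs => ⟨hs, Set.mem_univ _⟩)
    have h1 : Tendsto (fun s => g s y) (𝓝[Set.Ico a t0] t0) (𝓝 (g t0 y)) :=
      (hcy t0 ht0').mono_left (nhdsWithin_mono _ (fun s hs => ⟨hs.1, hs.2.le.trans ht0'.2⟩))
    have : (𝓝[Set.Ico a t0] t0).NeBot := by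
      rw [nhdsWithin_Ico_eq_nhdsLT hat]; infer_instance
    refine le_of_tendsto h1 ?_
    filter_upwards [self_mem_nhdsWithin] with s hs
    exact (hneg s hs y).le
  obtain ⟨d, hd0, hder⟩ := hd t0 ⟨hat, ht0'.2⟩ x0 (le_antisymm (hle x0) hg0) hle
  have hs := hder.tendsto_slope
  have hs2 : Tendsto (slope (fun s => g s x0) t0) (𝓝[<] t0) (𝓝 d) :=
    hs.mono_left (nhdsWithin_mono _ (fun s hs => ne_of_lt hs))
  have hev := hs2.eventually (gt_mem_nhds hd0)
  have hev2 : ∀ᶠ s in 𝓝[<] t0, s ∈ Set.Ico a t0 := by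
    rw [← nhdsWithin_Ico_eq_nhdsLT hat]; exact self_mem_nhdsWithin
  obtain ⟨s, h1, h2⟩ := (hev.and hev2).exists
  rw [slope_def_field] at h1
  have h3 := hneg s h2 x0
  have h4 : 0 < (g s x0 - g t0 x0) / (s - t0) :=
    div_pos_of_neg_of_neg (by linarith) (by linarith [h2.2])
  linarith

/-- Mixed partials commute. -/
theorem oh_mixed (u : ℝ → ℝ → ℝ) (S : Set ℝ) (hS : IsOpen S)
    (diff_t : ∀ t ∈ S, ∀ x : ℝ, DifferentiableAt ℝ (fun s => u s x) t)
    (diff_x : ∀ t ∈ S, ∀ x : ℝ, DifferentiableAt ℝ (u t) x)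
    (diff_tx : ∀ t ∈ S, ∀ x : ℝ, DifferentiableAt ℝ (fun y => deriv (fun s => u s y) t) x)
    (cont_utx : ContinuousOn (fun p : ℝ × ℝ => deriv (fun y => deriv (fun s => u s y) p.1) p.2)
      (S ×ˢ (Set.univ : Set ℝ))) (t : ℝ) (ht : t ∈ S) (x : ℝ) :
    HasDerivAt (fun s => deriv (u s) x) (deriv (fun y => deriv (fun s => u s y) t) x) t := by
  set c := deriv (fun y => deriv (fun s => u s y) t) x with hcdef
  have hca : ContinuousAt (fun p : ℝ × ℝ => deriv (fun y => deriv (fun s => u s y) p.1) p.2)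
      (t, x) := cont_utx.continuousAt ((hS.prod isOpen_univ).mem_nhds ⟨ht, Set.mem_univ _⟩)
  rw [hasDerivAt_iff_isLittleO, Asymptotics.isLittleO_iff]
  intro ε hε
  obtain ⟨δ1, hδ1, hb1⟩ := Metric.continuousAt_iff.mp hca ε hε
  obtain ⟨δ2, hδ2, hb2⟩ := Metric.isOpen_iff.mp hS t ht
  have hδ : 0 < min δ1 δ2 := lt_min hδ1 hδ2
  have key : ∀ s ∈ Metric.ball t (min δ1 δ2), ∀ y ∈ Metric.ball x δ1,
      ‖deriv (fun y => deriv (fun s => u s y) s) y - c‖ ≤ ε := by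
    intro s hs y hy
    have := hb1 (x := (s, y)) (by
      rw [Prod.dist_eq]; exact max_lt (lt_of_lt_of_le hs (min_le_left _ _)) hy)
    rw [Real.dist_eq] at this
    exact this.le
  have key2 : ∀ s ∈ Metric.ball t (min δ1 δ2), ∀ y ∈ Metric.ball x δ1,
      ‖deriv (fun s => u s y) s - deriv (fun s => u s x) s - c * (y - x)‖ ≤ ε * ‖y - x‖ := by
    intro s hs y hy
    have hsS : s ∈ S := hb2 (Metric.ball_subset_ball (min_le_right _ _) hs)
    have := (convex_ball x δ1).norm_image_sub_le_of_norm_hasDerivWithin_le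
      (f := fun y => deriv (fun s => u s y) s - c * y)
      (f' := fun y => deriv (fun y => deriv (fun s => u s y) s) y - c) (C := ε) (x := x) (y := y)
      (fun z hz => (((diff_tx s hsS z).hasDerivAt).sub
        (by simpa using (hasDerivAt_id z).const_mul c)).hasDerivWithinAt)
      (fun z hz => key s hs z hz) (Metric.mem_ball_self hδ1) hy
    have e : deriv (fun s => u s y) s - deriv (fun s => u s x) s - c * (y - x)
        = (deriv (fun s => u s y) s - c * y) - (deriv (fun s => u s x) s - c * x) := by ring
    rw [e]
    exact this
  filter_upwards [Metric.ball_mem_nhds t hδ] with s hs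
  have hsS : s ∈ S := hb2 (Metric.ball_subset_ball (min_le_right _ _) hs)
  have hw : HasDerivAt (fun y => u s y - u t y - (s - t) * c * y)
      (deriv (u s) x - deriv (u t) x - (s - t) * c) x :=
    ((diff_x s hsS x).hasDerivAt.sub (diff_x t ht x).hasDerivAt).sub
      (by simpa using (hasDerivAt_id x).const_mul ((s - t) * c))
  rw [smul_eq_mul]
  refine hw.le_of_lip' (by positivity) ?_
  filter_upwards [Metric.ball_mem_nhds x hδ1] with y hy
  have := (convex_ball t (min δ1 δ2)).norm_image_sub_le_of_norm_hasDerivWithin_le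
      (f := fun s => u s y - u s x - c * (y - x) * s)
      (f' := fun s => deriv (fun s => u s y) s - deriv (fun s => u s x) s - c * (y - x))
      (C := ε * ‖y - x‖) (x := t) (y := s)
      (fun z hz => by
        have hzS : z ∈ S := hb2 (Metric.ball_subset_ball (min_le_right _ _) hz)
        exact (((diff_t z hzS y).hasDerivAt.sub (diff_t z hzS x).hasDerivAt).sub
        (by simpa using (hasDerivAt_id z).const_mul (c * (y - x)))).hasDerivWithinAt)
      (fun z hz => key2 z hz y hy) (Metric.mem_ball_self hδ) hs
  calc _ = ‖u s y - u s x - c * (y - x) * s - (u t y - u t x - c * (y - x) * t)‖ := by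
        congr 1; ring
    _ ≤ _ := this
    _ = _ := by ring

theorem oh_P (γ T : ℝ) (hγ : 0 < γ) (u : ℝ → ℝ → ℝ)
    (hsol : IsPeriodicOHSolution γ (Set.Ico 0 T) u) (t : ℝ) (ht : t ∈ Set.Ioo 0 T)
    (R : ℝ) (hR : ∀ x, |u t x| ≤ R) (x : ℝ) :
    |deriv (fun s => u s x) t + u t x * deriv (u t) x| ≤ γ * R := by
  have sub : Set.Ioo 0 T ⊆ Set.Ico 0 T := Set.Ioo_subset_Ico_self
  have slice : ∀ (F : ℝ × ℝ → ℝ), ContinuousOn F (Set.Ico 0 T ×ˢ (Set.univ : Set ℝ)) →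
      ∀ s ∈ Set.Ico 0 T, Continuous (fun x => F (s, x)) := by
    intro F hF s hs
    exact hF.comp_continuous (by fun_prop) (fun x => ⟨hs, Set.mem_univ _⟩)
  -- zero mean
  set P : ℝ → ℝ := fun x => deriv (fun s => u s x) t + u t x * deriv (u t) x with hP
  have hPd : ∀ y, HasDerivAt P (γ * u t y) y := by
    intro y
    have h1 := (hsol.diff_tx t (sub ht) y).hasDerivAt.add
      ((hsol.diff_x t (sub ht) y).hasDerivAt.mul (hsol.diff_xx t (sub ht) y).hasDerivAt)
    refine h1.congr_deriv ?_
    have := hsol.eqn t (sub ht) ht.1 y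
    linarith [this, sq (deriv (u t) y)]
  have hmean : ∀ s ∈ Set.Ioo 0 T, (∫ x in (0:ℝ)..1, u s x) = 0 := by
    intro s hs
    have hd : ∀ y, HasDerivAt (fun x => deriv (fun s => u s x) s + u s x * deriv (u s) x)
        (γ * u s y) y := by
      intro y
      have h1 := (hsol.diff_tx s (sub hs) y).hasDerivAt.add
        ((hsol.diff_x s (sub hs) y).hasDerivAt.mul (hsol.diff_xx s (sub hs) y).hasDerivAt)
      refine h1.congr_deriv ?_
      have := hsol.eqn s (sub hs) hs.1 y
      linarith [this, sq (deriv (u s) y)]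
    have hi := intervalIntegral.integral_eq_sub_of_hasDerivAt (a := 0) (b := 1)
      (fun y _ => hd y)
      (((slice _ hsol.cont_u s (sub hs)).const_mul γ).intervalIntegrable _ _)
    have e1 : deriv (fun s => u s 1) s = deriv (fun s => u s 0) s := by
      apply Filter.EventuallyEq.deriv_eq
      filter_upwards [isOpen_Ioo.mem_nhds hs] with r hr
      simpa using hsol.periodic r (sub hr) 0
    have e2 : u s 1 = u s 0 := by simpa using hsol.periodic s (sub hs) 0
    have e3 : deriv (u s) 1 = deriv (u s) 0 := by
      have h : (fun x => u s (x + 1)) = u s := funext (hsol.periodic s (sub hs))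
      have := deriv_comp_add_const (u s) 1 0
      rw [h] at this
      simpa using this.symm
    rw [intervalIntegral.integral_const_mul, e1, e2, e3, sub_self] at hi
    exact (mul_eq_zero.mp hi).resolve_left hγ.ne'
  have hut : (∫ x in (0:ℝ)..1, deriv (fun s => u s x) t) = 0 := by
    obtain ⟨δ, hδ, hball⟩ := Metric.nhds_basis_closedBall.mem_iff.mp (isOpen_Ioo.mem_nhds ht)
    have hcomp : IsCompact (Metric.closedBall t δ ×ˢ Set.Icc (0:ℝ) 1) :=
      (isCompact_closedBall t δ).prod isCompact_Icc
    obtain ⟨C, hC⟩ := hcomp.exists_bound_of_continuousOn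
      (hsol.cont_ut.mono (Set.prod_mono (hball.trans sub) (Set.subset_univ _)))
    have hh := intervalIntegral.hasDerivAt_integral_of_dominated_loc_of_deriv_le
      (μ := MeasureTheory.volume) (a := 0) (b := 1) (bound := fun _ => C) (F := u)
      (F' := fun s x => deriv (fun s => u s x) s) (x₀ := t) (s := Metric.closedBall t δ)
      (Metric.closedBall_mem_nhds t hδ)
      (by
        filter_upwards [isOpen_Ioo.mem_nhds ht] with s hs
        exact (slice _ hsol.cont_u s (sub hs)).aestronglyMeasurable)
      ((slice _ hsol.cont_u t (sub ht)).intervalIntegrable _ _)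
      (slice _ hsol.cont_ut t (sub ht)).aestronglyMeasurable
      (Filter.Eventually.of_forall (fun x hx s hs => by
        rw [Set.uIoc_of_le zero_le_one] at hx
        exact hC (s, x) ⟨hs, ⟨hx.1.le, hx.2⟩⟩))
      (continuous_const.intervalIntegrable _ _)
      (Filter.Eventually.of_forall (fun x hx s hs =>
        (hsol.diff_t s (sub (hball hs)) x).hasDerivAt))
    have h0 : HasDerivAt (fun s => ∫ x in (0:ℝ)..1, u s x) 0 t := by
      apply (hasDerivAt_const t (0:ℝ)).congr_of_eventuallyEq
      filter_upwards [isOpen_Ioo.mem_nhds ht] with s hs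
      exact hmean s hs
    exact hh.2.unique h0
  have huux : (∫ x in (0:ℝ)..1, u t x * deriv (u t) x) = 0 := by
    have hi := intervalIntegral.integral_eq_sub_of_hasDerivAt (a := 0) (b := 1)
      (f := fun x => (u t x) ^ 2 / 2) (f' := fun x => u t x * deriv (u t) x)
      (fun y _ => by
        have := ((hsol.diff_x t (sub ht) y).hasDerivAt.pow 2).div_const 2
        refine this.congr_deriv ?_
        simp only [Nat.cast_ofNat, Nat.add_one_sub_one, pow_one]
        ring)
      (((slice _ hsol.cont_u t (sub ht)).mul
        (slice _ hsol.cont_ux t (sub ht))).intervalIntegrable _ _)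
    have e2 : u t 1 = u t 0 := by simpa using hsol.periodic t (sub ht) 0
    rw [hi, e2, sub_self]
  have hPc : Continuous P := (slice _ hsol.cont_ut t (sub ht)).add
    ((slice _ hsol.cont_u t (sub ht)).mul (slice _ hsol.cont_ux t (sub ht)))
  have hPint : ∀ a : ℝ, (∫ y in a..a+1, P y) = 0 := by
    have hPper : Function.Periodic P 1 := by
      intro y
      have e1 : deriv (fun s => u s (y + 1)) t = deriv (fun s => u s y) t := by
        apply Filter.EventuallyEq.deriv_eq
        filter_upwards [isOpen_Ioo.mem_nhds ht] with r hr
        exact hsol.periodic r (sub hr) y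
      have e3 : deriv (u t) (y + 1) = deriv (u t) y := by
        have h : (fun x => u t (x + 1)) = u t := funext (hsol.periodic t (sub ht))
        have := deriv_comp_add_const (u t) 1 y
        rw [h] at this
        exact this.symm
      simp only [hP]
      rw [e1, e3, hsol.periodic t (sub ht) y]
    intro a
    have := hPper.intervalIntegral_add_eq a 0
    rw [this, zero_add]
    simp only [hP]
    rw [intervalIntegral.integral_add, hut, huux, add_zero]
    · exact (slice _ hsol.cont_ut t (sub ht)).intervalIntegrable _ _
    · exact ((slice _ hsol.cont_u t (sub ht)).mul
        (slice _ hsol.cont_ux t (sub ht))).intervalIntegrable _ _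
  have hR0 : 0 ≤ R := (abs_nonneg _).trans (hR 0)
  have hlip : ∀ y z, |P z - P y| ≤ γ * R * |z - y| := by
    intro y z
    exact convex_univ.norm_image_sub_le_of_norm_hasDerivWithin_le (f := P)
      (f' := fun y => γ * u t y)
      (fun w _ => (hPd w).hasDerivWithinAt)
      (fun w _ => by
        rw [Real.norm_eq_abs, abs_mul, abs_of_pos hγ]
        exact mul_le_mul_of_nonneg_left (hR w) hγ.le)
      (Set.mem_univ y) (Set.mem_univ z)
  have hconst : (∫ y in x..x+1, (P x - P y)) = P x := by
    rw [intervalIntegral.integral_sub (continuous_const.intervalIntegrable _ _)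
      (hPc.intervalIntegrable _ _), hPint]
    simp
  have := intervalIntegral.norm_integral_le_of_norm_le_const (a := x) (b := x + 1)
    (f := fun y => P x - P y) (C := γ * R) (fun y hy => by
      rw [Set.uIoc_of_le (by linarith)] at hy
      refine (hlip y x).trans ?_
      have : |x - y| ≤ 1 := by rw [abs_le]; constructor <;> linarith [hy.1, hy.2]
      nlinarith [mul_nonneg hγ.le hR0])
  rw [hconst] at this
  simpa using this

theorem oh_bound (γ T : ℝ) (hγ : 0 < γ) (hT : 0 < T) (u : ℝ → ℝ → ℝ)
    (hsol : IsPeriodicOHSolution γ (Set.Ico 0 T) u) :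
    ∃ M, 0 < M ∧ ∀ t ∈ Set.Ico (T/2) T, ∀ x, |u t x| ≤ M := by
  have hmem : T / 2 ∈ Set.Ioo 0 T := ⟨by linarith, by linarith⟩
  have sub : Set.Ioo 0 T ⊆ Set.Ico 0 T := Set.Ioo_subset_Ico_self
  have hcu : Continuous (u (T/2)) :=
    hsol.cont_u.comp_continuous (f := fun x => ((T/2, x) : ℝ × ℝ)) (by fun_prop)
      (fun x => ⟨sub hmem, Set.mem_univ _⟩)
  obtain ⟨C, hC⟩ := (isCompact_Icc (a := (0:ℝ)) (b := 1)).exists_bound_of_continuousOn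
    hcu.continuousOn
  have hC' : ∀ x, |u (T/2) x| ≤ C := by
    intro x
    obtain ⟨y, hy, he⟩ := Function.Periodic.exists_mem_Ico₀ (f := u (T/2)) (c := 1)
      (fun x => hsol.periodic _ (sub hmem) x) one_pos x
    rw [he]; exact hC y ⟨hy.1, hy.2.le⟩
  have hC0 : 0 ≤ C := (abs_nonneg _).trans (hC' 0)
  set L := γ + 1 with hL
  set ρ : ℝ → ℝ := fun t => (C + 1) * Real.exp (L * t) with hρ
  have hρpos : ∀ t, 0 < ρ t := fun t => by simp only [hρ]; positivity
  have hρd : ∀ t, HasDerivAt ρ (L * ρ t) t := by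
    intro t
    have := (((hasDerivAt_id t).const_mul L).exp).const_mul (C + 1)
    refine this.congr_deriv ?_
    simp only [hρ, id]; ring
  refine ⟨ρ T, hρpos T, ?_⟩
  intro b hb x
  have hsubI : Set.Icc (T/2) b ⊆ Set.Ioo 0 T := fun s hs =>
    ⟨by linarith [hs.1], lt_of_le_of_lt hs.2 hb.2⟩
  have hbar := oh_barrier (fun t x => u t x ^ 2 - ρ t ^ 2) (T/2) b
    (fun t ht x => by simp only [hsol.periodic t (sub (hsubI ht)) x])
    (by
      refine ContinuousOn.sub ?_ ?_
      · exact (hsol.cont_u.mono (Set.prod_mono (hsubI.trans sub) le_rfl)).pow 2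
      · apply Continuous.continuousOn
        simp only [hρ]
        fun_prop)
    (fun x => by
      have h1 := hC' x
      have h2 : C + 1 ≤ ρ (T/2) := by
        have : 1 ≤ Real.exp (L * (T/2)) := Real.one_le_exp (by positivity)
        simp only [hρ]; nlinarith
      have : u (T/2) x ^ 2 < ρ (T/2) ^ 2 := by
        rw [sq_lt_sq, abs_of_pos (hρpos _)]; linarith
      linarith)
    (fun t ht x h0 hle => by
      have htI : t ∈ Set.Ioo 0 T := hsubI ⟨ht.1.le, ht.2⟩
      have hR : ∀ y, |u t y| ≤ ρ t := fun y => by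
        have := hle y
        rw [← abs_of_pos (hρpos t)]
        exact sq_le_sq.mp (by linarith)
      have hux : u t x * deriv (u t) x = 0 := by
        have hm : IsLocalMax (fun y => u t y ^ 2) x :=
          Filter.Eventually.of_forall (fun y => by
            have := hle y
            show u t y ^ 2 ≤ u t x ^ 2
            linarith)
        have hd := (hsol.diff_x t (sub htI) x).hasDerivAt.pow 2
        have := hm.hasDerivAt_eq_zero hd
        simp at this
        rcases this with h | h <;> simp [h]
      have hP := oh_P γ T hγ u hsol t htI (ρ t) hR x
      rw [hux, add_zero] at hP
      refine ⟨2 * u t x * deriv (fun s => u s x) t - 2 * ρ t * (L * ρ t), ?_, ?_⟩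
      · have h1 : u t x * deriv (fun s => u s x) t ≤ ρ t * (γ * ρ t) := by
          calc _ ≤ |u t x * deriv (fun s => u s x) t| := le_abs_self _
            _ = |u t x| * |deriv (fun s => u s x) t| := abs_mul _ _
            _ ≤ _ := mul_le_mul (hR x) hP (abs_nonneg _) (hρpos t).le
        have h2 := mul_pos (hρpos t) (hρpos t)
        simp only [hL]
        nlinarith
      · have := ((hsol.diff_t t (sub htI) x).hasDerivAt.pow 2).sub ((hρd t).pow 2)
        refine this.congr_deriv ?_
        simp)
  have := hbar b ⟨hb.1, le_rfl⟩ x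
  have h2 : |u b x| ≤ ρ b := by
    rw [← abs_of_pos (hρpos b)]
    exact sq_le_sq.mp (by linarith)
  refine h2.trans ?_
  simp only [hρ]
  have : Real.exp (L * b) ≤ Real.exp (L * T) :=
    Real.exp_le_exp.mpr (mul_le_mul_of_nonneg_left hb.2.le (by positivity))
  nlinarith

theorem oh_v_deriv (γ T : ℝ) (u : ℝ → ℝ → ℝ)
    (hsol : IsPeriodicOHSolution γ (Set.Ico 0 T) u) (t : ℝ) (ht : t ∈ Set.Ioo 0 T) (x : ℝ)
    (hmin : ∀ y, deriv (u t) x ≤ deriv (u t) y) :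
    HasDerivAt (fun s => deriv (u s) x) (-(deriv (u t) x) ^ 2 + γ * u t x) t := by
  have sub : Set.Ioo 0 T ⊆ Set.Ico 0 T := Set.Ioo_subset_Ico_self
  have h := oh_mixed u (Set.Ioo 0 T) isOpen_Ioo (fun t ht => hsol.diff_t t (sub ht))
    (fun t ht => hsol.diff_x t (sub ht)) (fun t ht => hsol.diff_tx t (sub ht))
    (hsol.cont_utx.mono (Set.prod_mono sub le_rfl)) t ht x
  refine h.congr_deriv ?_
  have hm : IsLocalMin (deriv (u t)) x := Filter.Eventually.of_forall hmin
  have h2 := hsol.eqn t (sub ht) ht.1 x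
  rw [hm.deriv_eq_zero] at h2
  linarith

theorem oh_v_per (γ T : ℝ) (u : ℝ → ℝ → ℝ)
    (hsol : IsPeriodicOHSolution γ (Set.Ico 0 T) u) (t : ℝ) (ht : t ∈ Set.Ico 0 T) (x : ℝ) :
    deriv (u t) (x + 1) = deriv (u t) x := by
  have h : (fun x => u t (x + 1)) = u t := funext (hsol.periodic t ht)
  have := deriv_comp_add_const (u t) 1 x
  rw [h] at this
  exact this.symm

theorem oh_psi (k τ t : ℝ) (hk : 0 < k) (ht : t < τ) :
    HasDerivAt (fun s => -(k * (τ - s))⁻¹) (-k * ((k * (τ - t))⁻¹) ^ 2) t := by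
  have hne : k * (τ - t) ≠ 0 := (mul_pos hk (by linarith)).ne'
  have h1 : HasDerivAt (fun s => k * (τ - s)) (k * (-1)) t :=
    ((hasDerivAt_id t).const_sub τ).const_mul k
  refine (h1.inv hne).neg.congr_deriv ?_
  field_simp

/-- Basic inequality: `N < |k - 1| ψ²` from smallness at the initial time. -/
theorem oh_small (k τ t0 t N c : ℝ) (hk : 0 < k) (h0 : t0 ≤ t) (ht : t < τ) (hN : 0 ≤ N)
    (hs : N * (k * (τ - t0)) ^ 2 < c) : N < c * ((k * (τ - t))⁻¹) ^ 2 := by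
  have hq : 0 < k * (τ - t) := mul_pos hk (by linarith)
  have hqq : k * (τ - t) ≤ k * (τ - t0) := mul_le_mul_of_nonneg_left (by linarith) hk.le
  have h1 : N * (k * (τ - t)) ^ 2 < c :=
    lt_of_le_of_lt (mul_le_mul_of_nonneg_left (pow_le_pow_left₀ hq.le hqq 2) hN) hs
  rw [inv_pow, ← div_eq_mul_inv, lt_div_iff₀ (by positivity)]
  exact h1

theorem oh_forward (γ T N : ℝ) (hT : 0 < T) (u : ℝ → ℝ → ℝ)
    (hsol : IsPeriodicOHSolution γ (Set.Ico 0 T) u)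
    (hN : ∀ t ∈ Set.Ico (T/2) T, ∀ x, |γ * u t x| ≤ N)
    (k τ t0 : ℝ) (hk : 0 < k) (hτ : T ≤ τ) (ht0 : t0 ∈ Set.Ico (T/2) T)
    (hs : N * (k * (τ - t0)) ^ 2 < k - 1)
    (hinit : ∀ x, -(k * (τ - t0))⁻¹ < deriv (u t0) x) :
    ∀ t ∈ Set.Ico t0 T, ∀ x, -(k * (τ - t))⁻¹ < deriv (u t) x := by
  intro b hb x
  have hN0 : 0 ≤ N := (abs_nonneg _).trans (hN t0 ht0 0)
  have hsubI : Set.Icc t0 b ⊆ Set.Ioo 0 T := fun s hs =>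
    ⟨by linarith [hs.1, ht0.1], lt_of_le_of_lt hs.2 hb.2⟩
  have sub : Set.Ioo 0 T ⊆ Set.Ico 0 T := Set.Ioo_subset_Ico_self
  have hbar := oh_barrier (fun t x => -(k * (τ - t))⁻¹ - deriv (u t) x) t0 b
    (fun t ht x => by simp only [oh_v_per γ T u hsol t (sub (hsubI ht)) x])
    (by
      refine ContinuousOn.sub ?_ (hsol.cont_ux.mono (Set.prod_mono (hsubI.trans sub) le_rfl))
      refine ContinuousOn.neg (ContinuousOn.inv₀ (by fun_prop) ?_)
      rintro ⟨s, y⟩ ⟨hs, -⟩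
      have := (hsubI hs).2
      exact (mul_pos hk (by simp only; linarith)).ne')
    (fun x => by linarith [hinit x])
    (fun t ht x h0 hle => by
      have htI : t ∈ Set.Icc t0 b := ⟨ht.1.le, ht.2⟩
      have htT := (hsubI htI).2
      have hd := oh_v_deriv γ T u hsol t (hsubI htI) x (fun y => by
        have := hle y
        linarith)
      refine ⟨_, ?_, (oh_psi k τ t hk (by linarith)).sub hd⟩
      have h1 := oh_small k τ t0 t N (k - 1) hk htI.1 (by linarith) hN0 hs
      have h2 := (abs_le.mp (hN t ⟨ht0.1.trans htI.1, htT⟩ x)).1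
      have h3 : deriv (u t) x = -(k * (τ - t))⁻¹ := by linarith
      rw [h3]
      nlinarith)
  have := hbar b ⟨hb.1, le_rfl⟩ x
  linarith

theorem oh_backward (γ T N : ℝ) (hT : 0 < T) (u : ℝ → ℝ → ℝ)
    (hsol : IsPeriodicOHSolution γ (Set.Ico 0 T) u)
    (hN : ∀ t ∈ Set.Ico (T/2) T, ∀ x, |γ * u t x| ≤ N)
    (k τ t0 t1 : ℝ) (hk : 0 < k) (hτ : τ < T) (ht0 : t0 ∈ Set.Ico (T/2) T)
    (ht1 : t1 ∈ Set.Ico t0 τ)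
    (hs : N * (k * (τ - t0)) ^ 2 < 1 - k)
    (hinit : ∀ x, -(k * (τ - t1))⁻¹ < deriv (u t1) x) :
    ∀ x, -(k * (τ - t0))⁻¹ < deriv (u t0) x := by
  intro x
  have hN0 : 0 ≤ N := (abs_nonneg _).trans (hN t0 ht0 0)
  have hsubI : ∀ s ∈ Set.Icc (-t1) (-t0), -s ∈ Set.Ioo 0 T := fun s hs =>
    ⟨by linarith [hs.2, ht0.1], by linarith [hs.1, ht1.2]⟩
  have sub : Set.Ioo 0 T ⊆ Set.Ico 0 T := Set.Ioo_subset_Ico_self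
  have hbar := oh_barrier (fun s x => -(k * (τ - -s))⁻¹ - deriv (u (-s)) x) (-t1) (-t0)
    (fun t ht x => by simp only [oh_v_per γ T u hsol (-t) (sub (hsubI t ht)) x])
    (by
      refine ContinuousOn.sub ?_ ?_
      · refine ContinuousOn.neg (ContinuousOn.inv₀ (by fun_prop) ?_)
        rintro ⟨s, y⟩ ⟨hs, -⟩
        have h1 : -t1 ≤ s := hs.1
        have h2 := ht1.2
        exact (mul_pos hk (by simp only; linarith)).ne'
      · exact hsol.cont_ux.comp (f := fun p : ℝ × ℝ => ((-p.1, p.2) : ℝ × ℝ)) (by fun_prop)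
          (fun p hp => ⟨sub (hsubI p.1 hp.1), Set.mem_univ _⟩))
    (fun x => by
      have := hinit x
      simp only [neg_neg]
      linarith)
    (fun s ht x h0 hle => by
      have htI : s ∈ Set.Icc (-t1) (-t0) := ⟨ht.1.le, ht.2⟩
      have hτs : -s < τ := by linarith [htI.1, ht1.2]
      have hd := oh_v_deriv γ T u hsol (-s) (hsubI s htI) x (fun y => by
        have := hle y
        linarith)
      have hg := (oh_psi k τ (-s) hk hτs).sub hd
      have hg2 := hg.comp s (hasDerivAt_neg s)
      refine ⟨_, ?_, hg2⟩
      have h1 := oh_small k τ t0 (-s) N (1 - k) hk (by linarith [htI.2]) hτs hN0 hs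
      have h2 := (abs_le.mp (hN (-s) ⟨by linarith [ht0.1, htI.2], (hsubI s htI).2⟩ x)).2
      have h3 : deriv (u (-s)) x = -(k * (τ - -s))⁻¹ := by linarith
      rw [h3]
      nlinarith)
  have := hbar (-t0) ⟨by linarith [ht1.1], le_rfl⟩ x
  simp only [neg_neg] at this
  linarith

theorem oh_lower (γ T N : ℝ) (hT : 0 < T) (u : ℝ → ℝ → ℝ)
    (hsol : IsPeriodicOHSolution γ (Set.Ico 0 T) u)
    (hN : ∀ t ∈ Set.Ico (T/2) T, ∀ x, |γ * u t x| ≤ N)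
    (k t0 : ℝ) (hk : 0 < k) (ht0 : t0 ∈ Set.Ico (T/2) T)
    (hs : N * (k * (T - t0)) ^ 2 < 1 - k) (x : ℝ) :
    -(k * (T - t0))⁻¹ ≤ deriv (u t0) x := by
  have hN0 : 0 ≤ N := (abs_nonneg _).trans (hN t0 ht0 0)
  have key : ∀ τ ∈ Set.Ioo t0 T, -(k * (τ - t0))⁻¹ ≤ deriv (u t0) x := by
    intro τ hτ
    have hsubI : Set.Icc t0 τ ⊆ Set.Ico 0 T := fun s hs =>
      ⟨by linarith [hs.1, ht0.1], lt_of_le_of_lt hs.2 hτ.2⟩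
    obtain ⟨C, hC⟩ := ((isCompact_Icc (a := t0) (b := τ)).prod
      (isCompact_Icc (a := (0:ℝ)) (b := 1))).exists_bound_of_continuousOn
      (hsol.cont_ux.mono (Set.prod_mono hsubI (Set.subset_univ _)))
    have hC' : ∀ t ∈ Set.Icc t0 τ, ∀ x, |deriv (u t) x| ≤ C := by
      intro t ht x
      obtain ⟨y, hy, he⟩ := Function.Periodic.exists_mem_Ico₀ (f := deriv (u t)) (c := 1)
        (fun x => oh_v_per γ T u hsol t (hsubI ht) x) one_pos x
      rw [he]; exact hC (t, y) ⟨ht, hy.1, hy.2.le⟩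
    have hC0 : 0 ≤ C := (abs_nonneg _).trans (hC' t0 ⟨le_rfl, hτ.1.le⟩ 0)
    -- choose t1
    set η := min (τ - t0) ((k * (C + 1))⁻¹) with hη
    have hηpos : 0 < η := lt_min (by linarith [hτ.1]) (by positivity)
    have hη1 : η ≤ τ - t0 := min_le_left _ _
    have hη2 : η ≤ (k * (C + 1))⁻¹ := min_le_right _ _
    have ht1 : τ - η ∈ Set.Ico t0 τ := ⟨by linarith, by linarith⟩
    refine (oh_backward γ T N hT u hsol hN k τ t0 (τ - η) hk hτ.2 ht0 ht1 ?_ ?_ x).le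
    · refine lt_of_le_of_lt ?_ hs
      refine mul_le_mul_of_nonneg_left (pow_le_pow_left₀ ?_ ?_ 2) hN0
      · exact (mul_pos hk (by linarith [hτ.1])).le
      · exact mul_le_mul_of_nonneg_left (by linarith [hτ.2]) hk.le
    · intro y
      have h1 := (abs_le.mp (hC' (τ - η) ⟨ht1.1, ht1.2.le⟩ y)).1
      have h2 : C + 1 ≤ (k * (τ - (τ - η)))⁻¹ := by
        rw [sub_sub_cancel, le_inv_comm₀ (by positivity) (by positivity)]
        calc k * η ≤ k * (k * (C + 1))⁻¹ := mul_le_mul_of_nonneg_left hη2 hk.le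
          _ = (C + 1)⁻¹ := by field_simp
      linarith
  have hcont : ContinuousAt (fun τ => -(k * (τ - t0))⁻¹) T := by
    refine ContinuousAt.neg (ContinuousAt.inv₀ (by fun_prop) ?_)
    exact (mul_pos hk (by linarith [ht0.2])).ne'
  refine le_of_tendsto (hcont.tendsto.mono_left (nhdsWithin_le_nhds (s := Set.Iio T))) ?_
  filter_upwards [Ioo_mem_nhdsLT ht0.2] with τ hτ using key τ hτ

/-- blow-up rate: `(T-t)·inf_x u_x(t,x) → -1` as `t ↑ T`. -/
theorem blowup_rate_inf
    (γ T : ℝ) (hγ : 0 < γ) (hT : 0 < T) (u₀ : ℝ → ℝ) (u : ℝ → ℝ → ℝ)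
    (hsol : IsPeriodicOHSolution γ (Set.Ico 0 T) u) (h0 : u 0 = u₀)
    (hmean : (∫ x in (0:ℝ)..1, u₀ x) = 0)
    (hC3 : ∀ t ∈ Set.Ico (0 : ℝ) T, ContDiff ℝ 3 (u t))
    (hblow : Filter.Tendsto (fun t => ⨅ x : ℝ, deriv (u t) x)
      (nhdsWithin T (Set.Iio T)) Filter.atBot) :
    Filter.Tendsto (fun t => (T - t) * ⨅ x : ℝ, deriv (u t) x)
      (nhdsWithin T (Set.Iio T)) (nhds (-1)) := by
  have sub : Set.Ioo 0 T ⊆ Set.Ico 0 T := Set.Ioo_subset_Ico_self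
  obtain ⟨M, hM, hMb⟩ := oh_bound γ T hγ hT u hsol
  set N := γ * M with hNdef
  have hNpos : 0 < N := mul_pos hγ hM
  have hN : ∀ t ∈ Set.Ico (T/2) T, ∀ x, |γ * u t x| ≤ N := by
    intro t ht x
    rw [abs_mul, abs_of_pos hγ]
    exact mul_le_mul_of_nonneg_left (hMb t ht x) hγ.le
  have hsmall : ∀ k c : ℝ, 0 < c → ∀ᶠ t in nhdsWithin T (Set.Iio T),
      N * (k * (T - t)) ^ 2 < c := by
    intro k c hc
    have hcont : ContinuousAt (fun t => N * (k * (T - t)) ^ 2) T := by fun_prop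
    have := hcont.tendsto.mono_left (nhdsWithin_le_nhds (s := Set.Iio T))
    simp only [sub_self, mul_zero, ne_eq, OfNat.ofNat_ne_zero, not_false_eq_true, zero_pow] at this
    exact this.eventually (gt_mem_nhds hc)
  have hnear : ∀ᶠ t in nhdsWithin T (Set.Iio T), t ∈ Set.Ico (T/2) T :=
    Ico_mem_nhdsLT (by linarith)
  have hlow : ∀ k ∈ Set.Ioo (0:ℝ) 1, ∀ᶠ t in nhdsWithin T (Set.Iio T),
      -k⁻¹ ≤ (T - t) * ⨅ x : ℝ, deriv (u t) x := by
    intro k hk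
    filter_upwards [hnear, hsmall k (1 - k) (by linarith [hk.2])] with t ht hs
    have h1 : -(k * (T - t))⁻¹ ≤ ⨅ x : ℝ, deriv (u t) x :=
      le_ciInf (oh_lower γ T N hT u hsol hN k t hk.1 ht hs)
    have hpos : 0 < T - t := by linarith [ht.2]
    calc -k⁻¹ = (T - t) * -(k * (T - t))⁻¹ := by
          have := hk.1.ne'
          field_simp
      _ ≤ _ := mul_le_mul_of_nonneg_left h1 hpos.le
  have hup : ∀ k : ℝ, 1 < k → ∀ᶠ t in nhdsWithin T (Set.Iio T),
      (T - t) * (⨅ x : ℝ, deriv (u t) x) ≤ -k⁻¹ := by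
    intro k hk
    have hk0 : 0 < k := by linarith
    filter_upwards [hnear, hsmall k (k - 1) (by linarith),
      hsmall (2⁻¹) (1 - 2⁻¹) (by norm_num)] with t ht hs hs2
    have hpos : 0 < T - t := by linarith [ht.2]
    have hbdd : BddBelow (Set.range (fun x => deriv (u t) x)) :=
      ⟨_, by
        rintro _ ⟨x, rfl⟩
        exact oh_lower γ T N hT u hsol hN 2⁻¹ t (by norm_num) ht hs2 x⟩
    by_contra hcon
    push Not at hcon
    have hcon2 : -(k * (T - t))⁻¹ < ⨅ x : ℝ, deriv (u t) x := by
      have : (T - t) * -(k * (T - t))⁻¹ = -k⁻¹ := by field_simp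
      rw [← this] at hcon
      exact lt_of_mul_lt_mul_left hcon hpos.le
    have hne : k * (T - t) ≠ 0 := (mul_pos hk0 hpos).ne'
    have hc1 : ContinuousAt (fun τ => -(k * (τ - t))⁻¹) T :=
      ContinuousAt.neg (ContinuousAt.inv₀ (by fun_prop) hne)
    have hc2 : ContinuousAt (fun τ => N * (k * (τ - t)) ^ 2) T := by fun_prop
    have e1 := (hc1.tendsto.mono_left (nhdsWithin_le_nhds (s := Set.Ioi T))).eventually
      (gt_mem_nhds hcon2)
    have e2 := (hc2.tendsto.mono_left (nhdsWithin_le_nhds (s := Set.Ioi T))).eventually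
      (gt_mem_nhds hs)
    have e3 : ∀ᶠ τ in nhdsWithin T (Set.Ioi T), τ ∈ Set.Ioi T := self_mem_nhdsWithin
    obtain ⟨τ, ⟨h1, h2⟩, h3⟩ := ((e1.and e2).and e3).exists
    have h3' : T < τ := h3
    have hfor := oh_forward γ T N hT u hsol hN k τ t hk0 h3'.le ht h2
      (fun x => lt_of_lt_of_le h1 (ciInf_le hbdd x))
    have e4 := hblow.eventually (Filter.eventually_lt_atBot (-(k * (τ - T))⁻¹))
    obtain ⟨s, h4, h5⟩ := (e4.and (Ico_mem_nhdsLT ht.2)).exists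
    have h6 : -(k * (τ - s))⁻¹ ≤ ⨅ x : ℝ, deriv (u s) x := le_ciInf (fun x => (hfor s h5 x).le)
    have h7 : (k * (τ - s))⁻¹ ≤ (k * (τ - T))⁻¹ := by
      apply inv_anti₀ (mul_pos hk0 (by linarith))
      exact mul_le_mul_of_nonneg_left (by linarith [h5.2]) hk0.le
    linarith
  rw [tendsto_order]
  constructor
  · intro a ha
    have ha' : 1 < -a := by linarith
    have hk : ((-a + 1) / 2)⁻¹ ∈ Set.Ioo (0:ℝ) 1 :=
      ⟨inv_pos.mpr (by linarith), inv_lt_one_of_one_lt₀ (by linarith)⟩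
    filter_upwards [hlow _ hk] with t ht
    rw [inv_inv] at ht
    linarith
  · intro a ha
    by_cases hz : a < 0
    · have h0 : 0 < (-a + 1) / 2 := by linarith
      filter_upwards [hup ((-a + 1) / 2)⁻¹ ((one_lt_inv₀ h0).mpr (by linarith))] with t ht
      rw [inv_inv] at ht
      linarith
    · filter_upwards [hup 2 (by norm_num)] with t ht
      norm_num at ht
      linarith
end

section
/- Let γ > 0, let T ∈ (0,∞), and let u be a periodic classical solution of the Ostrovsky–Hunter equation on [0,T) with initial data u₀ satisfying ∫₀¹ u₀(x) dx = 0, which is in addition three times continuously differentiable in x, and suppose that lim_{t↑T} inf_{x∈ℝ} u_x(t,x) = −∞. Then lim_{t↑T} ( (T−t) · sup_{x∈ℝ} u_x(t,x) ) = 0; in fact, 0 ≤ sup_{x∈ℝ} u_x(t,x) ≤ sup_{x∈ℝ} u₀'(x) + γ ( T ‖u₀‖_{L∞} + (γ T²/2) ‖u₀‖_{L²} ) for all t ∈ [0,T). -/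
open MeasureTheory Filter Set intervalIntegral

lemma OH_pint (F F' : ℝ → ℝ → ℝ) (U : Set ℝ) (hU : IsOpen U) (a b : ℝ)
    (cF : ContinuousOn (fun p : ℝ × ℝ => F p.1 p.2) (U ×ˢ uIcc a b))
    (cF' : ContinuousOn (fun p : ℝ × ℝ => F' p.1 p.2) (U ×ˢ uIcc a b))
    (h : ∀ t ∈ U, ∀ x ∈ uIcc a b, HasDerivAt (fun s => F s x) (F' t x) t)
    (t0 : ℝ) (ht0 : t0 ∈ U) :
    HasDerivAt (fun t => ∫ x in a..b, F t x) (∫ x in a..b, F' t0 x) t0 := by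
  have slice : ∀ G : ℝ → ℝ → ℝ, ContinuousOn (fun p : ℝ × ℝ => G p.1 p.2) (U ×ˢ uIcc a b) →
      ∀ t ∈ U, ContinuousOn (G t) (uIcc a b) := by
    intro G hG t ht
    exact hG.comp (f := fun x => (t, x)) (by fun_prop) (fun x hx => ⟨ht, hx⟩)
  obtain ⟨ε, hε, hb⟩ := Metric.nhds_basis_closedBall.mem_iff.1 (hU.mem_nhds ht0)
  obtain ⟨C, hC⟩ := ((isCompact_closedBall t0 ε).prod (isCompact_uIcc (a := a) (b := b))).exists_bound_of_continuousOn
    (cF'.mono (prod_mono hb subset_rfl))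
  have := hasDerivAt_integral_of_dominated_loc_of_deriv_le (μ := volume) (𝕜 := ℝ) (F := F) (F' := F')
    (x₀ := t0) (s := Metric.closedBall t0 ε) (bound := fun _ => C) (a := a) (b := b)
    (Metric.closedBall_mem_nhds _ hε) ?_ ?_ ?_ ?_ ?_ ?_
  · exact this.2
  · filter_upwards [hU.mem_nhds ht0] with t ht
    exact ((slice F cF t ht).mono uIoc_subset_uIcc).aestronglyMeasurable measurableSet_uIoc
  · exact (slice F cF t0 ht0).intervalIntegrable
  · exact ((slice F' cF' t0 ht0).mono uIoc_subset_uIcc).aestronglyMeasurable measurableSet_uIoc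
  · refine ae_of_all _ fun x hx t ht => hC (t, x) ⟨ht, uIoc_subset_uIcc hx⟩
  · exact intervalIntegrable_const
  · exact ae_of_all _ fun x hx t ht => h t (hb ht) x (uIoc_subset_uIcc hx)

/-- Maximum principle. -/
lemma OH_max (T : ℝ) (f f' : ℝ → ℝ → ℝ)
    (per : ∀ t ∈ Ico 0 T, Function.Periodic (f t) 1)
    (cf : ContinuousOn (fun p : ℝ × ℝ => f p.1 p.2) (Ico 0 T ×ˢ univ))
    (h : ∀ t ∈ Ioo 0 T, ∀ x, HasDerivAt (fun s => f s x) (f' t x) t)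
    (h0 : ∀ x, f 0 x ≤ 0)
    (hm : ∀ t ∈ Ioo 0 T, ∀ x ∈ Icc (0:ℝ) 1, (∀ y, f t y ≤ f t x) → f' t x ≤ 0) :
    ∀ t ∈ Ico 0 T, ∀ x, f t x ≤ 0 := by
  intro t1 ht1 x1
  by_contra! hpos
  have ht1p : 0 < t1 := by
    rcases ht1.1.eq_or_lt with h | h
    · subst h; exact absurd (h0 x1) (not_le.2 hpos)
    · exact h
  obtain ⟨ε, hε, hεt⟩ : ∃ ε > 0, ε * t1 < f t1 x1 :=
    ⟨f t1 x1 / (2 * t1), by positivity, by field_simp; linarith⟩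
  have hsub : Icc 0 t1 ×ˢ Icc (0:ℝ) 1 ⊆ Ico 0 T ×ˢ univ :=
    fun p hp => ⟨⟨hp.1.1, hp.1.2.trans_lt ht1.2⟩, trivial⟩
  have red : ∀ t ∈ Ico 0 T, ∀ y, ∃ z ∈ Icc (0:ℝ) 1, f t y = f t z := by
    intro t ht y
    obtain ⟨z, hz, e⟩ := (per t ht).exists_mem_Ico₀ one_pos y
    exact ⟨z, ⟨hz.1, hz.2.le⟩, e⟩
  obtain ⟨⟨ts, xs⟩, hs, hmax⟩ := (isCompact_Icc.prod isCompact_Icc).exists_isMaxOn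
    (s := Icc 0 t1 ×ˢ Icc (0:ℝ) 1) (f := fun p : ℝ × ℝ => f p.1 p.2 - ε * p.1)
    ⟨(0, 0), ⟨by simp [ht1p.le], by simp⟩⟩ ((cf.mono hsub).sub (by fun_prop))
  have hts : ts ∈ Ico 0 T := (hsub hs).1
  have hM : ∀ t ∈ Icc 0 t1, ∀ y, f t y - ε * t ≤ f ts xs - ε * ts := by
    intro t ht y
    obtain ⟨z, hz, e⟩ := red t ⟨ht.1, ht.2.trans_lt ht1.2⟩ y
    rw [e]
    exact hmax (show (t, z) ∈ _ from ⟨ht, hz⟩)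
  have htp : 0 < ts := by
    rcases hts.1.eq_or_lt with h | h
    · have := hM t1 ⟨ht1p.le, le_rfl⟩ x1
      have h2 := h0 xs
      rw [← h] at this
      linarith
    · exact h
  have hto : ts ∈ Ioo 0 T := ⟨htp, hts.2⟩
  have hle := hm ts hto xs hs.2 (fun y => by have := hM ts hs.1 y; linarith)
  have hd : HasDerivAt (fun s => f s xs - ε * s) (f' ts xs - ε * 1) ts :=
    (h ts hto xs).sub ((hasDerivAt_id ts).const_mul ε)
  have hd'' : Tendsto (slope (fun s => f s xs - ε * s) ts) (nhdsWithin ts (Iio ts))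
      (nhds (f' ts xs - ε * 1)) := by
    have hd' := hasDerivWithinAt_iff_tendsto_slope.1 (hd.hasDerivWithinAt (s := Iio ts))
    simpa using hd'
  have : 0 ≤ f' ts xs - ε * 1 := by
    refine ge_of_tendsto hd'' ?_
    filter_upwards [Ioo_mem_nhdsLT htp] with s hs'
    rw [slope_def_field]
    apply div_nonneg_of_nonpos
    · have := hM s ⟨hs'.1.le, hs'.2.le.trans hs.1.2⟩ xs
      linarith
    · linarith [hs'.2]
  linarith

/-- continuity of the space integral -/
lemma OH_cont (T : ℝ) (f : ℝ → ℝ → ℝ)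
    (cf : ContinuousOn (fun p : ℝ × ℝ => f p.1 p.2) (Ico 0 T ×ˢ univ)) (t1 : ℝ) (ht1 : t1 ∈ Ico 0 T) :
    ContinuousOn (fun t => ∫ x in (0:ℝ)..1, f t x) (Icc 0 t1) := by
  have key : Continuous (fun t => ∫ x in (0:ℝ)..1, f (max 0 (min t t1)) x) := by
    apply continuous_parametric_intervalIntegral_of_continuous'
    refine cf.comp_continuous (f := fun p : ℝ × ℝ => (max 0 (min p.1 t1), p.2)) (by fun_prop) ?_
    intro p
    exact ⟨⟨le_max_left _ _, max_lt (ht1.1.trans_lt ht1.2) ((min_le_right _ _).trans_lt ht1.2)⟩, trivial⟩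
  refine key.continuousOn.congr fun t ht => ?_
  simp [ht.1, ht.2]

lemma OH_slice (T : ℝ) (f : ℝ → ℝ → ℝ)
    (cf : ContinuousOn (fun p : ℝ × ℝ => f p.1 p.2) (Ico 0 T ×ˢ univ)) (t : ℝ) (ht : t ∈ Ico 0 T) :
    Continuous (f t) :=
  cf.comp_continuous (f := fun x => (t, x)) (by fun_prop) (fun x => ⟨ht, trivial⟩)

lemma OH_slice' (T : ℝ) (f : ℝ → ℝ → ℝ)
    (cf : ContinuousOn (fun p : ℝ × ℝ => f p.1 p.2) (Ico 0 T ×ˢ univ)) (x : ℝ) :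
    ContinuousOn (fun t => f t x) (Ico 0 T) :=
  cf.comp (f := fun t => (t, x)) (by fun_prop) (fun t ht => ⟨ht, trivial⟩)

section
variable {γ T : ℝ} {u : ℝ → ℝ → ℝ}

lemma OH_schwarz (hs : IsPeriodicOHSolution γ (Ico 0 T) u) (t0 : ℝ) (ht0 : t0 ∈ Ioo 0 T) (x : ℝ) :
    HasDerivAt (fun s => deriv (u s) x) (deriv (fun y => deriv (fun s => u s y) t0) x) t0 := by
  have sub : ∀ t ∈ Ioo 0 T, uIcc 0 t ⊆ Ico 0 T := by
    intro t ht s hs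
    rw [uIcc_of_le ht.1.le] at hs
    exact ⟨hs.1, hs.2.trans_lt ht.2⟩
  have c1 := OH_slice' T (fun t x => deriv (fun s => u s x) t) hs.cont_ut
  have c2 := OH_slice' T (fun t x => deriv (fun y => deriv (fun s => u s y) t) x) hs.cont_utx
  have rep : ∀ t ∈ Ioo 0 T, ∀ y, u t y = u 0 y + ∫ s in (0:ℝ)..t, deriv (fun s => u s y) s := by
    intro t ht y
    rw [integral_eq_sub_of_hasDerivAt (f := fun s => u s y)]
    · ring
    · intro s hs'
      exact (hs.diff_t s (sub t ht hs') y).hasDerivAt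
    · exact ((c1 y).mono (sub t ht)).intervalIntegrable
  have swap : ∀ f : ℝ → ℝ → ℝ, ContinuousOn (fun p : ℝ × ℝ => f p.1 p.2) (Ico 0 T ×ˢ univ) →
      ∀ t ∈ Ioo 0 T, ContinuousOn (fun p : ℝ × ℝ => f p.2 p.1) (univ ×ˢ uIcc 0 t) := by
    intro f hf t ht
    exact hf.comp (f := fun p : ℝ × ℝ => (p.2, p.1)) (by fun_prop) (fun p hp => ⟨sub t ht hp.2, trivial⟩)
  have rep2 : ∀ t ∈ Ioo 0 T, deriv (u t) x = deriv (u 0) x +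
      ∫ s in (0:ℝ)..t, deriv (fun y => deriv (fun r => u r y) s) x := by
    intro t ht
    have h1 := OH_pint (fun y s => deriv (fun r => u r y) s)
      (fun y s => deriv (fun z => deriv (fun r => u r z) s) y) univ isOpen_univ 0 t
      (swap (fun s y => deriv (fun r => u r y) s) hs.cont_ut t ht)
      (swap (fun s y => deriv (fun z => deriv (fun r => u r z) s) y) hs.cont_utx t ht)
      (fun y _ s hs' => (hs.diff_tx s (sub t ht hs') y).hasDerivAt) x trivial
    have h2 := (hs.diff_x 0 ⟨le_rfl, ht.1.trans ht.2⟩ x).hasDerivAt.add h1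
    have e : u t = (u 0 + fun y => ∫ s in (0:ℝ)..t, deriv (fun r => u r y) s) := funext fun y => rep t ht y
    rw [← e] at h2
    exact h2.deriv
  have hn : Ioo 0 T ∈ nhds t0 := isOpen_Ioo.mem_nhds ht0
  have h3 := integral_hasDerivAt_right (f := fun s => deriv (fun y => deriv (fun r => u r y) s) x)
    (a := 0) (b := t0)
    ((c2 x).mono (sub t0 ht0)).intervalIntegrable
    (((c2 x).mono Ioo_subset_Ico_self).stronglyMeasurableAtFilter isOpen_Ioo _ ht0)
    (((c2 x).mono Ioo_subset_Ico_self).continuousAt hn)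
  refine (h3.const_add (deriv (u 0) x)).congr_of_eventuallyEq ?_
  filter_upwards [hn] with t ht using rep2 t ht

lemma OH_ut_per (hs : IsPeriodicOHSolution γ (Ico 0 T) u) (t : ℝ) (ht : t ∈ Ioo 0 T) (x : ℝ) :
    deriv (fun s => u s (x + 1)) t = deriv (fun s => u s x) t := by
  apply Filter.EventuallyEq.deriv_eq
  filter_upwards [isOpen_Ioo.mem_nhds ht] with s hs'
  exact hs.periodic s (Ioo_subset_Ico_self hs') x

lemma OH_ux_per (hs : IsPeriodicOHSolution γ (Ico 0 T) u) (t : ℝ) (ht : t ∈ Ico 0 T) (x : ℝ) :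
    deriv (u t) (x + 1) = deriv (u t) x := by
  rw [← deriv_comp_add_const]
  congr 1
  exact funext (hs.periodic t ht)

lemma OH_g_deriv (hs : IsPeriodicOHSolution γ (Ico 0 T) u) (t : ℝ) (ht : t ∈ Ioo 0 T) (x : ℝ) :
    HasDerivAt (fun y => deriv (fun s => u s y) t + u t y * deriv (u t) y) (γ * u t x) x := by
  have ht' := Ioo_subset_Ico_self ht
  have := (hs.diff_tx t ht' x).hasDerivAt.add
    ((hs.diff_x t ht' x).hasDerivAt.mul (hs.diff_xx t ht' x).hasDerivAt)
  refine this.congr_deriv ?_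
  rw [← hs.eqn t ht' ht.1 x]; ring

lemma OH_g_per (hs : IsPeriodicOHSolution γ (Ico 0 T) u) (t : ℝ) (ht : t ∈ Ioo 0 T) :
    deriv (fun s => u s 1) t + u t 1 * deriv (u t) 1
     = deriv (fun s => u s 0) t + u t 0 * deriv (u t) 0 := by
  have ht' := Ioo_subset_Ico_self ht
  have a := OH_ut_per hs t ht 0
  have b := OH_ux_per hs t ht' 0
  have c := hs.periodic t ht' 0
  rw [zero_add] at a b c
  rw [a, b, c]

lemma OH_mean (hγ : 0 < γ) (hs : IsPeriodicOHSolution γ (Ico 0 T) u) (t : ℝ) (ht : t ∈ Ioo 0 T) :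
    ∫ x in (0:ℝ)..1, u t x = 0 := by
  have cu := OH_slice T u hs.cont_u t (Ioo_subset_Ico_self ht)
  have := integral_eq_sub_of_hasDerivAt (a := 0) (b := 1) (fun x _ => OH_g_deriv hs t ht x)
    ((cu.const_mul γ).intervalIntegrable _ _)
  rw [OH_g_per hs t ht, sub_self, intervalIntegral.integral_const_mul] at this
  exact (mul_eq_zero.1 this).resolve_left hγ.ne'

lemma OH_dt (f f' : ℝ → ℝ → ℝ)
    (cf : ContinuousOn (fun p : ℝ × ℝ => f p.1 p.2) (Ico 0 T ×ˢ univ))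
    (cf' : ContinuousOn (fun p : ℝ × ℝ => f' p.1 p.2) (Ico 0 T ×ˢ univ))
    (h : ∀ t ∈ Ioo 0 T, ∀ x, HasDerivAt (fun s => f s x) (f' t x) t) (t : ℝ) (ht : t ∈ Ioo 0 T) :
    HasDerivAt (fun t => ∫ x in (0:ℝ)..1, f t x) (∫ x in (0:ℝ)..1, f' t x) t := by
  have sub : Ioo 0 T ×ˢ uIcc (0:ℝ) 1 ⊆ Ico 0 T ×ˢ univ :=
    prod_mono Ioo_subset_Ico_self (subset_univ _)
  exact OH_pint f f' (Ioo 0 T) isOpen_Ioo 0 1 (cf.mono sub) (cf'.mono sub)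
    (fun t ht x _ => h t ht x) t ht

lemma OH_mean_ut (hγ : 0 < γ) (hs : IsPeriodicOHSolution γ (Ico 0 T) u) (t : ℝ) (ht : t ∈ Ioo 0 T) :
    ∫ x in (0:ℝ)..1, deriv (fun s => u s x) t = 0 := by
  have h1 := OH_dt u (fun t x => deriv (fun s => u s x) t) hs.cont_u hs.cont_ut
    (fun t ht x => (hs.diff_t t (Ioo_subset_Ico_self ht) x).hasDerivAt) t ht
  have h2 : HasDerivAt (fun t => ∫ x in (0:ℝ)..1, u t x) 0 t := by
    refine (hasDerivAt_const t (0:ℝ)).congr_of_eventuallyEq ?_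
    filter_upwards [isOpen_Ioo.mem_nhds ht] with s hs' using OH_mean hγ hs s hs'
  exact h1.unique h2

lemma OH_u_ends (hs : IsPeriodicOHSolution γ (Ico 0 T) u) (t : ℝ) (ht : t ∈ Ico 0 T) :
    u t 1 = u t 0 := by
  have c := hs.periodic t ht 0
  rwa [zero_add] at c

lemma OH_mean_g (hγ : 0 < γ) (hs : IsPeriodicOHSolution γ (Ico 0 T) u) (t : ℝ) (ht : t ∈ Ioo 0 T) :
    ∫ x in (0:ℝ)..1, (deriv (fun s => u s x) t + u t x * deriv (u t) x) = 0 := by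
  have ht' := Ioo_subset_Ico_self ht
  have cu := OH_slice T u hs.cont_u t ht'
  have cut := OH_slice T (fun t x => deriv (fun s => u s x) t) hs.cont_ut t ht'
  have cux := OH_slice T (fun t x => deriv (u t) x) hs.cont_ux t ht'
  have := integral_eq_sub_of_hasDerivAt (a := 0) (b := 1) (f := fun x => u t x ^ 2 / 2)
    (f' := fun x => u t x * deriv (u t) x)
    (fun x _ => by
      refine (((hs.diff_x t ht' x).hasDerivAt.pow 2).div_const 2).congr_deriv ?_
      simp; ring)
    ((cu.mul cux).intervalIntegrable _ _)
  have i2 : IntervalIntegrable (fun x => u t x * deriv (u t) x) volume 0 1 :=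
    (cu.mul cux).intervalIntegrable _ _
  rw [integral_add (cut.intervalIntegrable _ _) i2,
    OH_mean_ut hγ hs t ht, this, OH_u_ends hs t ht']
  ring

lemma OH_u_ut (hγ : 0 < γ) (hs : IsPeriodicOHSolution γ (Ico 0 T) u) (t : ℝ) (ht : t ∈ Ioo 0 T) :
    ∫ x in (0:ℝ)..1, 2 * u t x * deriv (fun s => u s x) t = 0 := by
  have ht' := Ioo_subset_Ico_self ht
  have cu := OH_slice T u hs.cont_u t ht'
  have cut := OH_slice T (fun t x => deriv (fun s => u s x) t) hs.cont_ut t ht'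
  have := integral_eq_sub_of_hasDerivAt (a := 0) (b := 1)
    (f := fun x => (deriv (fun s => u s x) t + u t x * deriv (u t) x) ^ 2 / γ - 2 / 3 * u t x ^ 3)
    (f' := fun x => 2 * u t x * deriv (fun s => u s x) t)
    (fun x _ => by
      refine ((((OH_g_deriv hs t ht x).pow 2).div_const γ).sub
        (((hs.diff_x t ht' x).hasDerivAt.pow 3).const_mul (2/3))).congr_deriv ?_
      field_simp
      simp
      ring)
    (((cu.const_mul 2).mul cut).intervalIntegrable _ _)
  rw [this, OH_g_per hs t ht, OH_u_ends hs t ht']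
  ring

lemma OH_L2 (hγ : 0 < γ) (hs : IsPeriodicOHSolution γ (Ico 0 T) u) (t : ℝ) (ht : t ∈ Ico 0 T) :
    ∫ x in (0:ℝ)..1, u t x ^ 2 = ∫ x in (0:ℝ)..1, u 0 x ^ 2 := by
  rcases ht.1.eq_or_lt with h | h
  · rw [← h]
  have cc := OH_cont T (fun t x => u t x ^ 2) (hs.cont_u.pow 2) t ht
  have hd : ∀ r ∈ Ioo 0 T, HasDerivAt (fun t => ∫ x in (0:ℝ)..1, u t x ^ 2) 0 r := by
    intro r hr
    refine HasDerivAt.congr_deriv ?_ (OH_u_ut hγ hs r hr)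
    refine OH_dt (fun t x => u t x ^ 2) (fun t x => 2 * u t x * deriv (fun s => u s x) t)
      (hs.cont_u.pow 2) ((continuousOn_const.mul hs.cont_u).mul hs.cont_ut) ?_ r hr
    intro r hr x
    refine ((hs.diff_t r (Ioo_subset_Ico_self hr) x).hasDerivAt.pow 2).congr_deriv ?_
    simp
  obtain ⟨c, hc, e⟩ := exists_hasDerivAt_eq_slope _ (fun _ => 0) h cc
    (fun r hr => hd r ⟨hr.1, hr.2.trans ht.2⟩)
  have : t - 0 ≠ 0 := by linarith
  field_simp at e
  linarith

lemma OH_g_bound (hγ : 0 < γ) (hs : IsPeriodicOHSolution γ (Ico 0 T) u) (t : ℝ) (ht : t ∈ Ioo 0 T)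
    (x : ℝ) (hx : x ∈ Icc (0:ℝ) 1) :
    |deriv (fun s => u s x) t + u t x * deriv (u t) x|
      ≤ γ * Real.sqrt (∫ x in (0:ℝ)..1, u 0 x ^ 2) := by
  have ht' := Ioo_subset_Ico_self ht
  have cu := OH_slice T u hs.cont_u t ht'
  have cut := OH_slice T (fun t x => deriv (fun s => u s x) t) hs.cont_ut t ht'
  have cux := OH_slice T (fun t x => deriv (u t) x) hs.cont_ux t ht'
  set g : ℝ → ℝ := fun x => deriv (fun s => u s x) t + u t x * deriv (u t) x with hg
  have cg : Continuous g := cut.add (cu.mul cux)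
  set m := ∫ x in (0:ℝ)..1, |u t x| with hm
  have hmL : m ≤ Real.sqrt (∫ x in (0:ℝ)..1, u 0 x ^ 2) := by
    apply Real.le_sqrt_of_sq_le
    rw [← OH_L2 hγ hs t ht']
    have h1 : 0 ≤ ∫ x in (0:ℝ)..1, (|u t x| - m) ^ 2 :=
      integral_nonneg zero_le_one fun x _ => sq_nonneg _
    have h2 : ∫ x in (0:ℝ)..1, (|u t x| - m) ^ 2 = ∫ x in (0:ℝ)..1, (u t x ^ 2 - 2 * m * |u t x| + m ^ 2) := by
      congr 1; ext x; rw [sub_sq, sq_abs]; ring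
    rw [h2, integral_add (Continuous.intervalIntegrable (by fun_prop) _ _)
      (Continuous.intervalIntegrable (by fun_prop) _ _),
      integral_sub (Continuous.intervalIntegrable (by fun_prop) _ _)
      (Continuous.intervalIntegrable (by fun_prop) _ _), intervalIntegral.integral_const_mul, ← hm] at h1
    simp at h1
    nlinarith
  have hdiff : ∀ y ∈ Icc (0:ℝ) 1, |g x - g y| ≤ γ * m := by
    intro y hy
    have := integral_eq_sub_of_hasDerivAt (a := y) (b := x) (fun x _ => OH_g_deriv hs t ht x)
      ((cu.const_mul γ).intervalIntegrable _ _)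
    change _ = g x - g y at this
    rw [← this, intervalIntegral.integral_const_mul, abs_mul, abs_of_pos hγ]
    gcongr
    have i1 : IntervalIntegrable (fun x => |u t x|) volume 0 1 := cu.abs.intervalIntegrable _ _
    refine (norm_integral_le_integral_norm_uIoc (f := u t) (μ := volume)).trans ?_
    rw [hm, integral_of_le zero_le_one]
    apply setIntegral_mono_set i1.1 (ae_of_all _ fun x => abs_nonneg _)
    apply HasSubset.Subset.eventuallyLE
    intro z hz
    rw [mem_uIoc] at hz
    rcases hz with hz | hz
    · exact ⟨hy.1.trans_lt hz.1, hz.2.trans hx.2⟩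
    · exact ⟨hx.1.trans_lt hz.1, hz.2.trans hy.2⟩
  have h0 : ∫ y in (0:ℝ)..1, g y = 0 := OH_mean_g hγ hs t ht
  have up : ∫ y in (0:ℝ)..1, (g x - γ * m) ≤ ∫ y in (0:ℝ)..1, g y :=
    integral_mono_on zero_le_one (by simp) (cg.intervalIntegrable _ _)
      fun y hy => by linarith [(abs_le.1 (hdiff y hy)).2]
  have dn : ∫ y in (0:ℝ)..1, g y ≤ ∫ y in (0:ℝ)..1, (g x + γ * m) :=
    integral_mono_on zero_le_one (cg.intervalIntegrable _ _) (by simp)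
      fun y hy => by linarith [(abs_le.1 (hdiff y hy)).1]
  rw [h0] at up dn
  simp at up dn
  have : γ * m ≤ γ * Real.sqrt (∫ x in (0:ℝ)..1, u 0 x ^ 2) := by gcongr
  change |g x| ≤ _
  rw [abs_le]
  constructor <;> linarith

lemma OH_bdd (f : ℝ → ℝ) (hf : Continuous f) (hp : Function.Periodic f 1) :
    BddAbove (range f) := by
  rw [← hp.image_Icc one_pos 0]
  exact isCompact_Icc.bddAbove_image hf.continuousOn

lemma OH_u_bound (hγ : 0 < γ) (hs : IsPeriodicOHSolution γ (Ico 0 T) u) (σ : ℝ) (hσ : |σ| = 1)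
    (t : ℝ) (ht : t ∈ Ico 0 T) (x : ℝ) :
    σ * u t x ≤ (⨆ y : ℝ, |u 0 y|) + γ * Real.sqrt (∫ x in (0:ℝ)..1, u 0 x ^ 2) * t := by
  have h00 : (0:ℝ) ∈ Ico 0 T := ⟨le_rfl, ht.1.trans_lt ht.2⟩
  set A := ⨆ y : ℝ, |u 0 y| with hA
  set B := Real.sqrt (∫ x in (0:ℝ)..1, u 0 x ^ 2) with hB
  have := OH_max T (fun t x => σ * u t x - (A + γ * B * t))
    (fun t x => σ * deriv (fun s => u s x) t - γ * B) ?_ ?_ ?_ ?_ ?_ t ht x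
  · linarith
  · intro t ht x
    simp only [hs.periodic t ht x]
  · exact (continuousOn_const.mul hs.cont_u).sub (by fun_prop)
  · intro t ht x
    refine (((hs.diff_t t (Ioo_subset_Ico_self ht) x).hasDerivAt.const_mul σ).sub
      (((hasDerivAt_id t).const_mul (γ * B)).const_add A)).congr_deriv (by simp)
  · intro x
    have hb : BddAbove (range fun y => |u 0 y|) := OH_bdd _ (OH_slice T u hs.cont_u 0 h00).abs
      (fun y => by simp only [hs.periodic 0 h00 y])
    have h1 : |u 0 x| ≤ A := le_ciSup hb x
    have h2 : σ * u 0 x ≤ |u 0 x| := by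
      refine (le_abs_self _).trans ?_
      rw [abs_mul, hσ, one_mul]
    simp only [mul_zero, add_zero]
    linarith
  · intro t ht x hx hmax
    have ht' := Ioo_subset_Ico_self ht
    have hloc : IsLocalMax (fun y => σ * u t y) x :=
      Filter.Eventually.of_forall fun y => by have := hmax y; linarith
    have hd := hloc.hasDerivAt_eq_zero ((hs.diff_x t ht' x).hasDerivAt.const_mul σ)
    have hg := OH_g_bound hγ hs t ht x hx
    have hσ0 : σ ≠ 0 := by rintro rfl; simp at hσ
    rw [(mul_eq_zero.1 hd).resolve_left hσ0, mul_zero, add_zero, ← hB] at hg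
    have h2 : σ * deriv (fun s => u s x) t ≤ |deriv (fun s => u s x) t| := by
      refine (le_abs_self _).trans ?_
      rw [abs_mul, hσ, one_mul]
    linarith

lemma OH_ux_bound (hγ : 0 < γ) (hs : IsPeriodicOHSolution γ (Ico 0 T) u)
    (t : ℝ) (ht : t ∈ Ico 0 T) (x : ℝ) :
    deriv (u t) x ≤ (⨆ y : ℝ, deriv (u 0) y) + γ * ((⨆ y : ℝ, |u 0 y|) * t
      + γ * Real.sqrt (∫ x in (0:ℝ)..1, u 0 x ^ 2) * t ^ 2 / 2) := by
  have h00 : (0:ℝ) ∈ Ico 0 T := ⟨le_rfl, ht.1.trans_lt ht.2⟩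
  have hub := OH_u_bound hγ hs 1 (by simp)
  set A := ⨆ y : ℝ, |u 0 y| with hA
  set C := ⨆ y : ℝ, deriv (u 0) y with hC
  set B := Real.sqrt (∫ x in (0:ℝ)..1, u 0 x ^ 2) with hB
  have := OH_max T (fun t x => deriv (u t) x - (C + γ * (A * t + γ * B * t ^ 2 / 2)))
    (fun t x => deriv (fun y => deriv (fun s => u s y) t) x - γ * (A + γ * B * t))
      ?_ ?_ ?_ ?_ ?_ t ht x
  · linarith
  · intro t ht x
    simp only [OH_ux_per hs t ht x]
  · exact hs.cont_ux.sub (by fun_prop)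
  · intro t ht x
    refine ((OH_schwarz hs t ht x).sub
      (((((hasDerivAt_id t).const_mul A).add ((((hasDerivAt_id t).pow 2).const_mul
        (γ * B)).div_const 2)).const_mul γ).const_add C)).congr_deriv ?_
    simp only [id_eq, mul_one]
    push_cast
    ring
  · intro x
    have hb : BddAbove (range fun y => deriv (u 0) y) :=
      OH_bdd _ (OH_slice T (fun t x => deriv (u t) x) hs.cont_ux 0 h00) (OH_ux_per hs 0 h00)
    have h1 : deriv (u 0) x ≤ C := le_ciSup hb x
    simp
    linarith
  · intro t ht x hx hmax
    have ht' := Ioo_subset_Ico_self ht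
    have hloc : IsLocalMax (deriv (u t)) x :=
      Filter.Eventually.of_forall fun y => by have := hmax y; linarith
    have hd := hloc.deriv_eq_zero
    have he := hs.eqn t ht' ht.1 x
    rw [hd] at he
    have h3 := mul_le_mul_of_nonneg_left (hub t ht' x) hγ.le
    nlinarith [sq_nonneg (deriv (u t) x)]

end

/-- `(T-t)·sup_x u_x(t,x) → 0` as `t ↑ T`; in fact
`0 ≤ sup_x u_x(t,x) ≤ sup u₀' + γ (T ‖u₀‖_{L∞} + (γT²/2) ‖u₀‖_{L²})` on `[0,T)`. -/
theorem blowup_rate_sup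
    (γ T : ℝ) (hγ : 0 < γ) (hT : 0 < T) (u₀ : ℝ → ℝ) (u : ℝ → ℝ → ℝ)
    (hsol : IsPeriodicOHSolution γ (Set.Ico 0 T) u) (h0 : u 0 = u₀)
    (hmean : (∫ x in (0:ℝ)..1, u₀ x) = 0)
    (hC3 : ∀ t ∈ Set.Ico (0 : ℝ) T, ContDiff ℝ 3 (u t))
    (hblow : Filter.Tendsto (fun t => ⨅ x : ℝ, deriv (u t) x)
      (nhdsWithin T (Set.Iio T)) Filter.atBot) :
    Filter.Tendsto (fun t => (T - t) * ⨆ x : ℝ, deriv (u t) x)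
        (nhdsWithin T (Set.Iio T)) (nhds 0) ∧
      ∀ t ∈ Set.Ico (0 : ℝ) T,
        0 ≤ (⨆ x : ℝ, deriv (u t) x) ∧
        (⨆ x : ℝ, deriv (u t) x) ≤ (⨆ x : ℝ, deriv u₀ x)
          + γ * (T * (⨆ y : ℝ, |u₀ y|)
            + γ * T ^ 2 / 2 * Real.sqrt (∫ x in (0:ℝ)..1, (u₀ x) ^ 2)) := by
  have hbd : ∀ t ∈ Set.Ico (0 : ℝ) T,
        0 ≤ (⨆ x : ℝ, deriv (u t) x) ∧
        (⨆ x : ℝ, deriv (u t) x) ≤ (⨆ x : ℝ, deriv u₀ x)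
          + γ * (T * (⨆ y : ℝ, |u₀ y|)
            + γ * T ^ 2 / 2 * Real.sqrt (∫ x in (0:ℝ)..1, (u₀ x) ^ 2)) := by
    intro t ht
    subst h0
    constructor
    · have hb : BddAbove (range fun y => deriv (u t) y) :=
        OH_bdd _ (OH_slice T (fun t x => deriv (u t) x) hsol.cont_ux t ht) (OH_ux_per hsol t ht)
      obtain ⟨c, hc, e⟩ := exists_deriv_eq_zero (f := u t) zero_lt_one
        (OH_slice T u hsol.cont_u t ht).continuousOn (OH_u_ends hsol t ht).symm
      rw [← e]
      exact le_ciSup hb c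
    · refine ciSup_le fun x => (OH_ux_bound hγ hsol t ht x).trans ?_
      have hA : 0 ≤ ⨆ y : ℝ, |u 0 y| := Real.iSup_nonneg fun y => abs_nonneg _
      have hB := Real.sqrt_nonneg (∫ x in (0:ℝ)..1, u 0 x ^ 2)
      have h1 : t ≤ T := ht.2.le
      have h2 : t ^ 2 ≤ T ^ 2 := pow_le_pow_left₀ ht.1 h1 2
      have h3 := mul_le_mul_of_nonneg_left h1 hA
      have h4 := mul_le_mul_of_nonneg_left h2 (mul_nonneg hγ.le hB)
      have h5 := mul_le_mul_of_nonneg_left (add_le_add h3 (div_le_div_of_nonneg_right h4 zero_le_two)) hγ.le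
      linarith
  refine ⟨?_, hbd⟩
  set K := (⨆ x : ℝ, deriv u₀ x)
          + γ * (T * (⨆ y : ℝ, |u₀ y|)
            + γ * T ^ 2 / 2 * Real.sqrt (∫ x in (0:ℝ)..1, (u₀ x) ^ 2)) with hK
  have hlim : Tendsto (fun t => (T - t) * K) (nhdsWithin T (Iio T)) (nhds 0) := by
    have : Continuous fun t : ℝ => (T - t) * K := by fun_prop
    have h := this.tendsto T
    simp only [sub_self, zero_mul] at h
    exact h.mono_left nhdsWithin_le_nhds
  refine squeeze_zero' ?_ ?_ hlim
  · filter_upwards [Ioo_mem_nhdsLT hT] with t ht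
    exact mul_nonneg (by linarith [ht.2]) (hbd t ⟨ht.1.le, ht.2⟩).1
  · filter_upwards [Ioo_mem_nhdsLT hT] with t ht
    exact mul_le_mul_of_nonneg_left (hbd t ⟨ht.1.le, ht.2⟩).2 (by linarith [ht.2])
end

section
/- Let γ > 0 and let u be a decaying classical solution of the Ostrovsky–Hunter equation on the line on [0,T) with initial data u₀, with antiderivatives v(t,x) = ∫_{−∞}^x u(t,y) dy and w(t,x) = ∫_{−∞}^x v(t,y) dy, and assume u(t,·), v(t,·), w(t,·) tend to 0 as |x| → ∞ for each t ∈ [0,T) and u(t,·), v(t,·) are square-integrable. Then both quantities Q(t) = ∫_ℝ u(t,x)² dx and E(t) = ∫_ℝ [ γ v(t,x)² + (1/3) u(t,x)³ ] dx are constant in t on [0,T). -/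
open MeasureTheory Filter Set intervalIntegral

/-- A decaying classical solution of the Ostrovsky–Hunter equation on the line,
on the set `S` of times (typically `[0,T)`): `u` is continuously differentiable
in `t`, twice continuously differentiable in `x`, integrable in `x` for each
time, and with `v(t,x) = ∫_{-∞}^x u(t,y) dy` the nonlocal equation
`u_t + u u_x = γ v` holds pointwise at positive times of `S`. -/
structure IsLineOHSolution (γ : ℝ) (S : Set ℝ) (u : ℝ → ℝ → ℝ) : Prop where
  diff_t : ∀ t ∈ S, ∀ x : ℝ, DifferentiableAt ℝ (fun s => u s x) t
  diff_x : ∀ t ∈ S, ∀ x : ℝ, DifferentiableAt ℝ (u t) x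
  diff_xx : ∀ t ∈ S, ∀ x : ℝ, DifferentiableAt ℝ (deriv (u t)) x
  cont_u : ContinuousOn (fun p : ℝ × ℝ => u p.1 p.2) (S ×ˢ (Set.univ : Set ℝ))
  cont_ut : ContinuousOn (fun p : ℝ × ℝ => deriv (fun s => u s p.2) p.1)
      (S ×ˢ (Set.univ : Set ℝ))
  cont_ux : ContinuousOn (fun p : ℝ × ℝ => deriv (u p.1) p.2) (S ×ˢ (Set.univ : Set ℝ))
  cont_uxx : ContinuousOn (fun p : ℝ × ℝ => deriv (deriv (u p.1)) p.2)
      (S ×ˢ (Set.univ : Set ℝ))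
  integrable : ∀ t ∈ S, MeasureTheory.Integrable (u t)
  eqn : ∀ t ∈ S, 0 < t → ∀ x : ℝ,
    deriv (fun s => u s x) t + u t x * deriv (u t) x = γ * ∫ y in Set.Iic x, u t y


namespace OHLine

lemma swap_cont {p : ℝ → ℝ → ℝ} (hp : Continuous (Function.uncurry p)) (a b c d : ℝ) :
    ∫ x in a..b, ∫ y in c..d, p x y = ∫ y in c..d, ∫ x in a..b, p x y := by
  apply MeasureTheory.intervalIntegral_intervalIntegral_swap
  have h : IntegrableOn (Function.uncurry p) (Set.uIcc a b ×ˢ Set.uIcc c d)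
      ((volume : Measure ℝ).prod volume) :=
    hp.continuousOn.integrableOn_compact (isCompact_uIcc.prod isCompact_uIcc)
  exact h.mono_set (Set.prod_mono Set.uIoc_subset_uIcc Set.uIoc_subset_uIcc)

lemma ae_Ioo {s t : ℝ} (hst : s ≤ t) {P : ℝ → Prop} (h : ∀ x ∈ Ioo s t, P x) :
    ∀ᵐ x ∂(volume : Measure ℝ), x ∈ Set.uIoc s t → P x := by
  have : ∀ᵐ x ∂(volume : Measure ℝ), x ≠ t := by
    simp [ae_iff]
  filter_upwards [this] with x hx hx'
  rw [Set.uIoc_of_le hst] at hx'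
  exact h x ⟨hx'.1, lt_of_le_of_ne hx'.2 hx⟩

lemma flux {s t C : ℝ} (hst : s ≤ t) {f p : ℝ → ℝ → ℝ} {l : ℝ → ℝ}
    (hp : Continuous (Function.uncurry p))
    (hf : ∀ x, f t x - f s x = ∫ τ in s..t, p τ x)
    (hb : ∀ τ ∈ Ioo s t, ∀ n : ℕ, |∫ x in (-(n:ℝ))..n, p τ x| ≤ C)
    (hl : ∀ τ ∈ Ioo s t, Tendsto (fun n : ℕ => ∫ x in (-(n:ℝ))..n, p τ x) atTop (nhds (l τ)))
    (hs : Integrable (f s)) (ht : Integrable (f t)) :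
    AEStronglyMeasurable l (volume.restrict (Set.uIoc s t)) ∧
      (∫ x, f t x) - (∫ x, f s x) = ∫ τ in s..t, l τ := by
  have hc : ∀ n : ℕ, Continuous (fun τ => ∫ x in (-(n:ℝ))..n, p τ x) := fun n =>
    intervalIntegral.continuous_parametric_intervalIntegral_of_continuous' hp _ _
  have h1 : Tendsto (fun n : ℕ => ∫ τ in s..t, ∫ x in (-(n:ℝ))..n, p τ x) atTop
      (nhds (∫ τ in s..t, l τ)) := by
    apply intervalIntegral.tendsto_integral_filter_of_dominated_convergence (fun _ => C)
    · exact Eventually.of_forall fun n => (hc n).aestronglyMeasurable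
    · exact Eventually.of_forall fun n => ae_Ioo hst fun τ hτ => hb τ hτ n
    · exact intervalIntegrable_const
    · exact ae_Ioo hst hl
  constructor
  · apply aestronglyMeasurable_of_tendsto_ae atTop
      (fun n : ℕ => (hc n).aestronglyMeasurable)
    rw [ae_restrict_iff' measurableSet_uIoc]
    exact ae_Ioo hst hl
  · have h2 : Tendsto (fun n : ℕ => ∫ x in (-(n:ℝ))..n, (f t x - f s x)) atTop
        (nhds (∫ x, (f t x - f s x))) :=
      intervalIntegral_tendsto_integral (ht.sub hs)
        (tendsto_neg_atTop_atBot.comp tendsto_natCast_atTop_atTop) tendsto_natCast_atTop_atTop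
    rw [integral_sub ht hs] at h2
    refine tendsto_nhds_unique h2 (h1.congr fun n => ?_)
    rw [swap_cont hp]
    simp only [hf]

/-- data at a single time -/
structure Slice (u v : ℝ → ℝ) : Prop where
  cu : Continuous u
  hv : ∀ x, HasDerivAt v (u x) x
  utop : Tendsto u atTop (nhds 0)
  ubot : Tendsto u atBot (nhds 0)
  vtop : Tendsto v atTop (nhds 0)
  vbot : Tendsto v atBot (nhds 0)
  iv : Integrable v
  iu2 : Integrable (fun x => u x ^ 2)
  iv2 : Integrable (fun x => v x ^ 2)

namespace Slice
variable {u v : ℝ → ℝ}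

lemma cv (h : Slice u v) : Continuous v :=
  continuous_iff_continuousAt.2 fun x => (h.hv x).continuousAt

lemma vsq_le (h : Slice u v) (x : ℝ) : v x ^ 2 ≤ (∫ y, v y ^ 2) + ∫ y, u y ^ 2 := by
  have hi : Integrable (fun y => 2 * v y * u y) := by
    refine (h.iv2.add h.iu2).mono' ((continuous_const.mul h.cv).mul h.cu).aestronglyMeasurable ?_
    refine Eventually.of_forall fun y => ?_
    simp only [Pi.add_apply, Real.norm_eq_abs]
    rw [abs_le]; constructor <;> nlinarith [sq_nonneg (v y - u y), sq_nonneg (v y + u y)]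
  have h1 : ∫ y in Iic x, 2 * v y * u y = v x ^ 2 - 0 := by
    apply MeasureTheory.integral_Iic_of_hasDerivAt_of_tendsto (f := fun y => v y ^ 2)
    · exact (h.cv.pow 2).continuousWithinAt
    · intro y _
      simpa using (h.hv y).fun_pow 2
    · exact hi.integrableOn
    · simpa using h.vbot.pow 2
  rw [sub_zero] at h1
  rw [← h1, ← integral_add h.iv2 h.iu2]
  calc _ ≤ ∫ y in Iic x, (v y ^ 2 + u y ^ 2) := by
        apply setIntegral_mono hi.integrableOn (h.iv2.add h.iu2).integrableOn
        intro y
        simp only [Pi.add_apply]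
        nlinarith [sq_nonneg (v y - u y)]
    _ ≤ _ := by
        apply setIntegral_le_integral (h.iv2.add h.iu2)
        exact Eventually.of_forall fun y => by simp only [Pi.zero_apply, Pi.add_apply]; positivity

lemma bddu (h : Slice u v) : ∃ C, ∀ x, |u x| ≤ C := by
  have ht : Tendsto u (cocompact ℝ) (nhds 0) := by
    rw [cocompact_eq_atBot_atTop]; exact h.ubot.sup h.utop
  let F : ZeroAtInftyContinuousMap ℝ ℝ := ⟨⟨u, h.cu⟩, ht⟩
  obtain ⟨C, hC⟩ := (F.isBounded_range).exists_norm_le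
  exact ⟨C, fun x => hC _ ⟨x, rfl⟩⟩

lemma bddv (h : Slice u v) : ∃ C, ∀ x, |v x| ≤ C := by
  refine ⟨√((∫ y, v y ^ 2) + ∫ y, u y ^ 2), fun x => Real.abs_le_sqrt (h.vsq_le x)⟩

lemma iu3 (h : Slice u v) : Integrable (fun x => u x ^ 3) := by
  obtain ⟨C, hC⟩ := h.bddu
  refine (h.iu2.const_mul C).mono' (h.cu.pow 3).aestronglyMeasurable ?_
  refine Eventually.of_forall fun y => ?_
  rw [Real.norm_eq_abs, abs_pow, pow_succ', sq_abs]
  exact mul_le_mul_of_nonneg_right (hC y) (sq_nonneg _)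

/-- integrability of a bounded continuous function times `u²` -/
lemma ibu2 (h : Slice u v) {w : ℝ → ℝ} (hw : Continuous w) {C : ℝ} (hC : ∀ x, |w x| ≤ C) :
    Integrable (fun x => w x * u x ^ 2) := by
  refine (h.iu2.const_mul C).mono' (hw.mul (h.cu.pow 2)).aestronglyMeasurable ?_
  refine Eventually.of_forall fun y => ?_
  rw [Real.norm_eq_abs, abs_mul, abs_of_nonneg (sq_nonneg (u y))]
  exact mul_le_mul_of_nonneg_right (hC y) (sq_nonneg _)

lemma bbu2 (h : Slice u v) {w : ℝ → ℝ} {C : ℝ} (hC : ∀ x, |w x| ≤ C) :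
    |∫ x, w x * u x ^ 2| ≤ C * ∫ x, u x ^ 2 := by
  rw [← MeasureTheory.integral_const_mul, ← Real.norm_eq_abs]
  refine MeasureTheory.norm_integral_le_of_norm_le (h.iu2.const_mul C) (Eventually.of_forall fun y => ?_)
  rw [Real.norm_eq_abs, abs_mul, abs_of_nonneg (sq_nonneg (u y))]
  exact mul_le_mul_of_nonneg_right (hC y) (sq_nonneg _)

lemma bbu2_interval (h : Slice u v) {w : ℝ → ℝ} (hw : Continuous w)
    {C : ℝ} (hC : ∀ x, |w x| ≤ C) (n : ℕ) :
    |∫ x in (-(n:ℝ))..n, w x * u x ^ 2| ≤ C * ∫ x, u x ^ 2 := by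
  have hn : (-(n:ℝ)) ≤ n := by linarith [(Nat.cast_nonneg n : (0:ℝ) ≤ n)]
  have hC0 : 0 ≤ C := (abs_nonneg _).trans (hC 0)
  rw [← MeasureTheory.integral_const_mul, intervalIntegral.integral_of_le hn,
    ← Real.norm_eq_abs]
  refine (MeasureTheory.norm_integral_le_of_norm_le (h.iu2.const_mul C).integrableOn
    (Eventually.of_forall fun y => ?_)).trans
    (setIntegral_le_integral (h.iu2.const_mul C) (Eventually.of_forall fun y => ?_))
  · rw [Real.norm_eq_abs, abs_mul, abs_of_nonneg (sq_nonneg (u y))]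
    exact mul_le_mul_of_nonneg_right (hC y) (sq_nonneg _)
  · simp only [Pi.zero_apply]; positivity

lemma vshift (h : Slice u v) :
    Tendsto (fun n : ℕ => ∫ x, (v x - v (x - n)) ^ 2) atTop (nhds (2 * ∫ x, v x ^ 2)) := by
  obtain ⟨C, hC⟩ := h.bddv
  have hi : ∀ a : ℝ, Integrable (fun x => v x * v (x - a)) := fun a => by
    refine (h.iv.norm.const_mul C).mono'
      (h.cv.mul (h.cv.comp (continuous_id.sub continuous_const))).aestronglyMeasurable ?_
    refine Eventually.of_forall fun y => ?_
    rw [norm_mul, mul_comm]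
    exact mul_le_mul_of_nonneg_right (hC _) (norm_nonneg _)
  have e : ∀ n : ℕ, ∫ x, (v x - v (x - n)) ^ 2 =
      2 * (∫ x, v x ^ 2) - 2 * ∫ x, v x * v (x - n) := fun n => by
    have h2 : Integrable (fun x => v (x - n) ^ 2) := h.iv2.comp_sub_right (n : ℝ)
    have h3 : ∫ x, v (x - n) ^ 2 = ∫ x, v x ^ 2 :=
      integral_sub_right_eq_self (fun x => v x ^ 2) (n : ℝ)
    have : (fun x => (v x - v (x - n)) ^ 2) =
        fun x => (v x ^ 2 + v (x - n) ^ 2) - 2 * (v x * v (x - n)) := by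
      funext x; ring
    rw [this, integral_sub (h.iv2.fun_add h2) ((hi n).const_mul 2), MeasureTheory.integral_const_mul,
      integral_add h.iv2 h2, h3]
    ring
  simp only [e]
  have h0 : Tendsto (fun n : ℕ => ∫ x, v x * v (x - n)) atTop (nhds (∫ x : ℝ, (0:ℝ))) := by
    apply MeasureTheory.tendsto_integral_filter_of_dominated_convergence (fun x => C * ‖v x‖)
    · exact Eventually.of_forall fun n => (hi n).aestronglyMeasurable
    · refine Eventually.of_forall fun n => Eventually.of_forall fun y => ?_
      rw [norm_mul, mul_comm]
      exact mul_le_mul_of_nonneg_right (hC _) (norm_nonneg _)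
    · exact h.iv.norm.const_mul C
    · refine Eventually.of_forall fun y => ?_
      have : Tendsto (fun n : ℕ => y - (n:ℝ)) atTop atBot :=
        tendsto_atBot_add_const_left _ y (tendsto_neg_atTop_atBot.comp tendsto_natCast_atTop_atTop)
      simpa using (h.vbot.comp this).const_mul (v y)
  rw [MeasureTheory.integral_zero] at h0
  simpa using (h0.const_mul 2).const_sub (2 * ∫ x, v x ^ 2)

lemma ishift (h : Slice u v) (a : ℝ) : Integrable (fun x => (v x - v (x - a)) ^ 2) := by
  refine ((h.iv2.const_mul 2).add ((h.iv2.comp_sub_right a).const_mul 2)).mono'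
    ((h.cv.sub (h.cv.comp (continuous_id.sub continuous_const))).pow 2).aestronglyMeasurable ?_
  refine Eventually.of_forall fun y => ?_
  rw [Real.norm_eq_abs, abs_of_nonneg (sq_nonneg _)]
  simp only [Pi.add_apply]
  nlinarith [sq_nonneg (v y + v (y - a))]

/-- the `h`-dependent rate -/
lemma rate (h : Slice u v) (a : ℝ) :
    Integrable (fun x => (v x - v (x - a)) * (u x ^ 2 - u (x - a) ^ 2)) ∧
    ∫ x, (v x - v (x - a)) * (u x ^ 2 - u (x - a) ^ 2) =
      2 * (∫ x, v x * u x ^ 2) - ∫ x, (v (x - a) + v (x + a)) * u x ^ 2 := by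
  obtain ⟨C, hC⟩ := h.bddv
  have i1 := h.ibu2 h.cv hC
  have i2 := h.ibu2 (w := fun x => v (x - a))
    (h.cv.comp (continuous_id.sub continuous_const)) (fun x => hC _)
  have i3 := h.ibu2 (w := fun x => v (x + a))
    (h.cv.comp (continuous_id.add continuous_const)) (fun x => hC _)
  have i3' := i3.comp_sub_right a
  have i1' := i1.comp_sub_right a
  have e3 := integral_sub_right_eq_self (μ := volume) (fun x => v (x + a) * u x ^ 2) a
  have e1 := integral_sub_right_eq_self (μ := volume) (fun x => v x * u x ^ 2) a
  simp only [sub_add_cancel] at i3' e3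
  have : (fun x => (v x - v (x - a)) * (u x ^ 2 - u (x - a) ^ 2)) =
      fun x => (v x * u x ^ 2 + v (x - a) * u (x - a) ^ 2) -
        (v (x - a) * u x ^ 2 + v x * u (x - a) ^ 2) := by
    funext x; ring
  rw [this]
  refine ⟨(i1.add i1').sub (i2.add i3'), ?_⟩
  rw [integral_sub (i1.fun_add i1') (i2.fun_add i3'), integral_add i1 i1', integral_add i2 i3', e3, e1]
  simp only [add_mul]
  rw [integral_add i2 i3]
  ring

lemma rate_lim (h : Slice u v) :
    Tendsto (fun n : ℕ => ∫ x, (v (x - n) + v (x + n)) * u x ^ 2) atTop (nhds 0) := by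
  obtain ⟨C, hC⟩ := h.bddv
  have hC2 : ∀ (a x : ℝ), |v (x - a) + v (x + a)| ≤ C + C := fun a x =>
    (abs_add_le _ _).trans (add_le_add (hC _) (hC _))
  have h0 : Tendsto (fun n : ℕ => ∫ x, (v (x - n) + v (x + n)) * u x ^ 2) atTop
      (nhds (∫ x : ℝ, (0:ℝ))) := by
    apply MeasureTheory.tendsto_integral_filter_of_dominated_convergence (fun x => (C + C) * u x ^ 2)
    · refine Eventually.of_forall fun n => (h.ibu2 ?_ (hC2 n)).aestronglyMeasurable
      exact (h.cv.comp (continuous_id.sub continuous_const)).add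
        (h.cv.comp (continuous_id.add continuous_const))
    · refine Eventually.of_forall fun n => Eventually.of_forall fun y => ?_
      rw [Real.norm_eq_abs, abs_mul, abs_of_nonneg (sq_nonneg (u y))]
      exact mul_le_mul_of_nonneg_right (hC2 _ _) (sq_nonneg _)
    · exact h.iu2.const_mul _
    · refine Eventually.of_forall fun y => ?_
      have h1 : Tendsto (fun n : ℕ => y - (n:ℝ)) atTop atBot :=
        tendsto_atBot_add_const_left _ y (tendsto_neg_atTop_atBot.comp tendsto_natCast_atTop_atTop)
      have h2 : Tendsto (fun n : ℕ => y + (n:ℝ)) atTop atTop :=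
        tendsto_atTop_add_const_left _ y tendsto_natCast_atTop_atTop
      simpa using ((h.vbot.comp h1).add (h.vtop.comp h2)).mul_const (u y ^ 2)
  simpa using h0

/-- window integral of `v` -/
lemma zder (h : Slice u v) (a x : ℝ) :
    HasDerivAt (fun x => ∫ y in (0:ℝ)..a, v (x - y)) (v x - v (x - a)) x := by
  have e : (fun x => ∫ y in (0:ℝ)..a, v (x - y)) =
      fun x => (∫ y in (0:ℝ)..x, v y) - ∫ y in (0:ℝ)..(x - a), v y := by
    funext x
    rw [intervalIntegral.integral_comp_sub_left (fun y => v y) x, sub_zero,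
      intervalIntegral.integral_interval_sub_left] <;> exact h.cv.intervalIntegrable _ _
  rw [e]
  have h1 : ∀ x, HasDerivAt (fun x => ∫ y in (0:ℝ)..x, v y) (v x) x := fun x =>
    h.cv.integral_hasStrictDerivAt 0 x |>.hasDerivAt
  exact (h1 x).sub (HasDerivAt.comp_sub_const x a (h1 (x - a)))

lemma zlim (h : Slice u v) (a : ℝ) {l : Filter ℝ} [l.IsCountablyGenerated]
    (hl : ∀ y, Tendsto (fun x : ℝ => v (x - y)) l (nhds 0)) :
    Tendsto (fun x => ∫ y in (0:ℝ)..a, v (x - y)) l (nhds 0) := by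
  obtain ⟨C, hC⟩ := h.bddv
  have : Tendsto (fun x => ∫ y in (0:ℝ)..a, v (x - y)) l (nhds (∫ y in (0:ℝ)..a, (0:ℝ))) := by
    apply intervalIntegral.tendsto_integral_filter_of_dominated_convergence (fun _ => C)
    · exact Eventually.of_forall fun x =>
        (h.cv.comp (continuous_const.sub continuous_id)).aestronglyMeasurable
    · exact Eventually.of_forall fun n => Eventually.of_forall fun y _ => hC _
    · exact intervalIntegrable_const
    · exact Eventually.of_forall fun y _ => hl y
  simpa using this

lemma zbd (_h : Slice u v) {C : ℝ} (hC : ∀ x, |v x| ≤ C) (a x : ℝ) :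
    |∫ y in (0:ℝ)..a, v (x - y)| ≤ C * |a| := by
  have := intervalIntegral.norm_integral_le_of_norm_le_const (a := 0) (b := a)
    (f := fun y => v (x - y)) (C := C) (fun y _ => hC _)
  simpa using this

end Slice

structure Strip (γ s t C : ℝ) (u ut ux v : ℝ → ℝ → ℝ) : Prop where
  hst : s ≤ t
  cu : Continuous (Function.uncurry u)
  cut : Continuous (Function.uncurry ut)
  hut : ∀ τ ∈ Ioo s t, ∀ x, HasDerivAt (fun σ => u σ x) (ut τ x) τ
  hux : ∀ τ ∈ Ioo s t, ∀ x, HasDerivAt (u τ) (ux τ x) x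
  sl : ∀ τ ∈ Icc s t, Slice (u τ) (v τ)
  pde : ∀ τ ∈ Ioo s t, ∀ x, ut τ x = γ * v τ x - u τ x * ux τ x
  bu : ∀ τ ∈ Ioo s t, ∀ x, |u τ x| ≤ C
  bv : ∀ τ ∈ Ioo s t, ∀ x, |v τ x| ≤ C

namespace Strip
variable {γ s t C : ℝ} {u ut ux v : ℝ → ℝ → ℝ}

lemma cuτ (h : Strip γ s t C u ut ux v) (x : ℝ) : Continuous (fun τ => u τ x) :=
  h.cu.comp (continuous_id.prodMk continuous_const)

lemma cutτ (h : Strip γ s t C u ut ux v) (x : ℝ) : Continuous (fun τ => ut τ x) :=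
  h.cut.comp (continuous_id.prodMk continuous_const)

lemma cutx (h : Strip γ s t C u ut ux v) (τ : ℝ) : Continuous (ut τ) :=
  h.cut.comp (continuous_const.prodMk continuous_id)

lemma cux (h : Strip γ s t C u ut ux v) (τ : ℝ) : Continuous (u τ) :=
  h.cu.comp (continuous_const.prodMk continuous_id)

lemma natTop : Tendsto (fun n : ℕ => (n : ℝ)) atTop atTop := tendsto_natCast_atTop_atTop
lemma natBot : Tendsto (fun n : ℕ => -(n : ℝ)) atTop atBot :=
  tendsto_neg_atTop_atBot.comp tendsto_natCast_atTop_atTop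

lemma Qconst (h : Strip γ s t C u ut ux v) : ∫ x, u t x ^ 2 = ∫ x, u s x ^ 2 := by
  have hs := h.sl s ⟨le_rfl, h.hst⟩
  have ht := h.sl t ⟨h.hst, le_rfl⟩
  have hp : Continuous (Function.uncurry fun τ x => 2 * u τ x * ut τ x) :=
    (continuous_const.mul h.cu).mul h.cut
  have key : ∀ τ ∈ Ioo s t, ∀ n : ℕ, ∫ x in (-(n:ℝ))..n, 2 * u τ x * ut τ x =
      (γ * v τ n ^ 2 - 2 / 3 * u τ n ^ 3) - (γ * v τ (-n) ^ 2 - 2 / 3 * u τ (-n) ^ 3) := by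
    intro τ hτ n
    apply intervalIntegral.integral_eq_sub_of_hasDerivAt
      (f := fun x => γ * v τ x ^ 2 - 2 / 3 * u τ x ^ 3)
    · intro x _
      have hsl := h.sl τ (Ioo_subset_Icc_self hτ)
      have := (((hsl.hv x).fun_pow 2).const_mul γ).sub
        (((h.hux τ hτ x).fun_pow 3).const_mul (2 / 3))
      refine this.congr_deriv ?_
      rw [h.pde τ hτ x]; push_cast; ring
    · exact ((continuous_const.mul (h.cux τ)).mul (h.cutx τ)).intervalIntegrable _ _
  have B := flux (f := fun τ x => u τ x ^ 2) (l := fun _ => 0)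
    (C := 2 * (|γ| * C ^ 2 + 2 / 3 * C ^ 3)) h.hst hp ?_ ?_ ?_ hs.iu2 ht.iu2
  · have := B.2
    simp only [intervalIntegral.integral_zero] at this
    linarith
  · intro x
    symm
    apply intervalIntegral.integral_eq_sub_of_hasDerivAt_of_le h.hst
      (f := fun τ => u τ x ^ 2)
    · exact ((h.cuτ x).pow 2).continuousOn
    · intro τ hτ
      simpa using (h.hut τ hτ x).fun_pow 2
    · exact ((continuous_const.mul (h.cuτ x)).mul (h.cutτ x)).intervalIntegrable _ _
  · intro τ hτ n
    rw [key τ hτ n]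
    have b1 : ∀ x, |γ * v τ x ^ 2 - 2 / 3 * u τ x ^ 3| ≤ |γ| * C ^ 2 + 2 / 3 * C ^ 3 := by
      intro x
      refine (abs_sub _ _).trans (add_le_add ?_ ?_)
      · rw [abs_mul, abs_pow]
        gcongr; exact h.bv τ hτ x
      · rw [abs_mul, abs_pow, abs_of_pos (by norm_num : (0:ℝ) < 2 / 3)]
        gcongr; exact h.bu τ hτ x
    refine (abs_sub _ _).trans ?_
    linarith [b1 n, b1 (-n)]
  · intro τ hτ
    simp only [key τ hτ]
    have hsl := h.sl τ (Ioo_subset_Icc_self hτ)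
    have a1 := ((hsl.vtop.comp natTop).pow 2).const_mul γ
    have a2 := ((hsl.utop.comp natTop).pow 3).const_mul (2 / 3)
    have a3 := ((hsl.vbot.comp natBot).pow 2).const_mul γ
    have a4 := ((hsl.ubot.comp natBot).pow 3).const_mul (2 / 3)
    simpa using (a1.sub a2).sub (a3.sub a4)

lemma sub (h : Strip γ s t C u ut ux v) {τ : ℝ} (hτ : τ ∈ Icc s t) :
    Strip γ s τ C u ut ux v where
  hst := hτ.1
  cu := h.cu
  cut := h.cut
  hut σ hσ := h.hut σ ⟨hσ.1, hσ.2.trans_le hτ.2⟩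
  hux σ hσ := h.hux σ ⟨hσ.1, hσ.2.trans_le hτ.2⟩
  sl σ hσ := h.sl σ ⟨hσ.1, hσ.2.trans hτ.2⟩
  pde σ hσ := h.pde σ ⟨hσ.1, hσ.2.trans_le hτ.2⟩
  bu σ hσ := h.bu σ ⟨hσ.1, hσ.2.trans_le hτ.2⟩
  bv σ hσ := h.bv σ ⟨hσ.1, hσ.2.trans_le hτ.2⟩

lemma cube (h : Strip γ s t C u ut ux v) :
    (∫ x, u t x ^ 3) - (∫ x, u s x ^ 3) = ∫ τ in s..t, 3 * γ * ∫ x, v τ x * u τ x ^ 2 := by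
  have hs := h.sl s ⟨le_rfl, h.hst⟩
  have ht := h.sl t ⟨h.hst, le_rfl⟩
  have hp : Continuous (Function.uncurry fun τ x => 3 * u τ x ^ 2 * ut τ x) :=
    (continuous_const.mul (h.cu.pow 2)).mul h.cut
  have key : ∀ τ ∈ Ioo s t, ∀ n : ℕ, ∫ x in (-(n:ℝ))..n, 3 * u τ x ^ 2 * ut τ x =
      3 * γ * (∫ x in (-(n:ℝ))..n, v τ x * u τ x ^ 2)
        - (3 / 4 * u τ n ^ 4 - 3 / 4 * u τ (-n) ^ 4) := by
    intro τ hτ n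
    have hsl := h.sl τ (Ioo_subset_Icc_self hτ)
    have c1 : Continuous (fun x => 3 * u τ x ^ 2 * ut τ x) :=
      (continuous_const.mul ((h.cux τ).pow 2)).mul (h.cutx τ)
    have c2 : Continuous (fun x => 3 * γ * (v τ x * u τ x ^ 2)) :=
      continuous_const.mul (hsl.cv.mul (hsl.cu.pow 2))
    have e : ∫ x in (-(n:ℝ))..n, (3 * γ * (v τ x * u τ x ^ 2) - 3 * u τ x ^ 2 * ut τ x) =
        3 / 4 * u τ n ^ 4 - 3 / 4 * u τ (-n) ^ 4 := by
      apply intervalIntegral.integral_eq_sub_of_hasDerivAt (f := fun x => 3 / 4 * u τ x ^ 4)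
      · intro x _
        refine (((h.hux τ hτ x).fun_pow 4).const_mul (3 / 4)).congr_deriv ?_
        rw [h.pde τ hτ x]; push_cast; ring
      · exact (c2.sub c1).intervalIntegrable _ _
    rw [intervalIntegral.integral_sub (c2.intervalIntegrable _ _) (c1.intervalIntegrable _ _),
      intervalIntegral.integral_const_mul] at e
    linarith
  refine (flux (f := fun τ x => u τ x ^ 3) (l := fun τ => 3 * γ * ∫ x, v τ x * u τ x ^ 2)
    (C := |3 * γ| * (C * ∫ x, u s x ^ 2) + (3 / 4 * C ^ 4 + 3 / 4 * C ^ 4))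
    h.hst hp ?_ ?_ ?_ hs.iu3 ht.iu3).2
  · intro x
    symm
    apply intervalIntegral.integral_eq_sub_of_hasDerivAt_of_le h.hst
      (f := fun τ => u τ x ^ 3)
    · exact ((h.cuτ x).pow 3).continuousOn
    · intro τ hτ
      simpa using (h.hut τ hτ x).fun_pow 3
    · exact ((continuous_const.mul ((h.cuτ x).pow 2)).mul (h.cutτ x)).intervalIntegrable _ _
  · intro τ hτ n
    have hsl := h.sl τ (Ioo_subset_Icc_self hτ)
    have b1 : ∀ x, |3 / 4 * u τ x ^ 4| ≤ 3 / 4 * C ^ 4 := by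
      intro x
      rw [abs_mul, abs_pow, abs_of_pos (by norm_num : (0:ℝ) < 3 / 4)]
      gcongr; exact h.bu τ hτ x
    rw [key τ hτ n]
    refine (abs_sub _ _).trans (add_le_add ?_ ((abs_sub _ _).trans (add_le_add (b1 _) (b1 _))))
    rw [abs_mul, ← (h.sub (Ioo_subset_Icc_self hτ)).Qconst]
    exact mul_le_mul_of_nonneg_left (hsl.bbu2_interval hsl.cv (h.bv τ hτ) n) (abs_nonneg _)
  · intro τ hτ
    simp only [key τ hτ]
    have hsl := h.sl τ (Ioo_subset_Icc_self hτ)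
    have a1 := (intervalIntegral_tendsto_integral (hsl.ibu2 hsl.cv (h.bv τ hτ))
      natBot natTop).const_mul (3 * γ)
    have a2 := ((hsl.utop.comp natTop).pow 4).const_mul (3 / 4)
    have a4 := ((hsl.ubot.comp natBot).pow 4).const_mul (3 / 4)
    simpa using a1.sub (a2.sub a4)

lemma win (h : Strip γ s t C u ut ux v) (a : ℝ) :
    AEStronglyMeasurable (fun τ => -∫ x, (v τ x - v τ (x - a)) * (u τ x ^ 2 - u τ (x - a) ^ 2))
      (volume.restrict (Set.uIoc s t)) ∧
    (∫ x, (v t x - v t (x - a)) ^ 2) - (∫ x, (v s x - v s (x - a)) ^ 2) =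
      ∫ τ in s..t, -∫ x, (v τ x - v τ (x - a)) * (u τ x ^ 2 - u τ (x - a) ^ 2) := by
  have hs := h.sl s ⟨le_rfl, h.hst⟩
  have ht := h.sl t ⟨h.hst, le_rfl⟩
  let g : ℝ → ℝ → ℝ := fun τ x => ∫ y in (0:ℝ)..a, u τ (x - y)
  let G : ℝ → ℝ → ℝ := fun τ x => ∫ y in (0:ℝ)..a, ut τ (x - y)
  have cg : Continuous (Function.uncurry g) := by
    apply intervalIntegral.continuous_parametric_intervalIntegral_of_continuous'
      (f := fun (p : ℝ × ℝ) y => u p.1 (p.2 - y))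
    exact h.cu.comp (by fun_prop : Continuous fun q : (ℝ × ℝ) × ℝ => (q.1.1, q.1.2 - q.2))
  have cG : Continuous (Function.uncurry G) := by
    apply intervalIntegral.continuous_parametric_intervalIntegral_of_continuous'
      (f := fun (p : ℝ × ℝ) y => ut p.1 (p.2 - y))
    exact h.cut.comp (by fun_prop : Continuous fun q : (ℝ × ℝ) × ℝ => (q.1.1, q.1.2 - q.2))
  have cgτ : ∀ x, Continuous (fun τ => g τ x) := fun x =>
    cg.comp (continuous_id.prodMk continuous_const)
  have cGτ : ∀ x, Continuous (fun τ => G τ x) := fun x =>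
    cG.comp (continuous_id.prodMk continuous_const)
  have cgx : ∀ τ, Continuous (g τ) := fun τ =>
    cg.comp (continuous_const.prodMk continuous_id)
  have cGx : ∀ τ, Continuous (G τ) := fun τ =>
    cG.comp (continuous_const.prodMk continuous_id)
  -- windows of u
  have gv : ∀ τ ∈ Icc s t, ∀ x, g τ x = v τ x - v τ (x - a) := by
    intro τ hτ x
    have hsl := h.sl τ hτ
    show ∫ y in (0:ℝ)..a, u τ (x - y) = _
    rw [intervalIntegral.integral_comp_sub_left (fun y => u τ y) x, sub_zero]
    exact intervalIntegral.integral_eq_sub_of_hasDerivAt (fun y _ => hsl.hv y)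
      (hsl.cu.intervalIntegrable _ _)
  have gG : ∀ τ ∈ Icc s t, ∀ x, g τ x = g s x + ∫ σ in s..τ, G σ x := by
    intro τ hτ x
    have e1 : ∫ σ in s..τ, G σ x = ∫ y in (0:ℝ)..a, ∫ σ in s..τ, ut σ (x - y) := by
      apply swap_cont (p := fun σ y => ut σ (x - y))
      exact h.cut.comp (by fun_prop : Continuous fun q : ℝ × ℝ => (q.1, x - q.2))
    have e2 : ∀ y, ∫ σ in s..τ, ut σ (x - y) = u τ (x - y) - u s (x - y) := by
      intro y
      apply intervalIntegral.integral_eq_sub_of_hasDerivAt_of_le hτ.1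
        (f := fun σ => u σ (x - y))
      · exact (h.cuτ _).continuousOn
      · intro σ hσ
        exact h.hut σ ⟨hσ.1, hσ.2.trans_le hτ.2⟩ _
      · exact (h.cutτ _).intervalIntegrable _ _
    rw [e1]
    simp only [e2]
    have ci : ∀ σ, IntervalIntegrable (fun y => u σ (x - y)) volume 0 a := fun σ =>
      ((h.cux σ).comp (continuous_const.sub continuous_id)).intervalIntegrable _ _
    rw [intervalIntegral.integral_sub (ci τ) (ci s)]
    show g τ x = g s x + (g τ x - g s x)
    ring
  have gder : ∀ τ ∈ Ioo s t, ∀ x, HasDerivAt (fun σ => g σ x) (G τ x) τ := by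
    intro τ hτ x
    have h1 : HasDerivAt (fun σ => g s x + ∫ r in s..σ, G r x) (G τ x) τ :=
      ((cGτ x).integral_hasStrictDerivAt s τ).hasDerivAt.const_add _
    refine h1.congr_of_eventuallyEq ?_
    filter_upwards [Icc_mem_nhds hτ.1 hτ.2] with σ hσ
    exact gG σ hσ x
  have Gx : ∀ τ ∈ Ioo s t, ∀ x, G τ x =
      -(1 / 2) * (u τ x ^ 2 - u τ (x - a) ^ 2) + γ * ∫ y in (0:ℝ)..a, v τ (x - y) := by
    intro τ hτ x
    have hsl := h.sl τ (Ioo_subset_Icc_self hτ)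
    have e1 : ∫ y in (0:ℝ)..a, (γ * v τ (x - y) - ut τ (x - y)) =
        (-(1 / 2) * u τ (x - a) ^ 2) - (-(1 / 2) * u τ (x - 0) ^ 2) := by
      apply intervalIntegral.integral_eq_sub_of_hasDerivAt
        (f := fun y => -(1 / 2) * u τ (x - y) ^ 2)
      · intro y _
        have h2 : HasDerivAt (fun y => u τ (x - y)) (-(ux τ (x - y))) y := by
          simpa using HasDerivAt.comp_const_sub x y (h.hux τ hτ (x - y))
        refine ((h2.fun_pow 2).const_mul (-(1 / 2))).congr_deriv ?_
        rw [h.pde τ hτ]; push_cast; ring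
      · exact ((continuous_const.mul (hsl.cv.comp (continuous_const.sub continuous_id))).sub
          ((h.cutx τ).comp (continuous_const.sub continuous_id))).intervalIntegrable _ _
    rw [intervalIntegral.integral_sub, intervalIntegral.integral_const_mul] at e1
    · simp only [sub_zero] at e1
      show ∫ y in (0:ℝ)..a, ut τ (x - y) = _
      linarith
    · exact (continuous_const.mul
        (hsl.cv.comp (continuous_const.sub continuous_id))).intervalIntegrable _ _
    · exact ((h.cutx τ).comp (continuous_const.sub continuous_id)).intervalIntegrable _ _
  have hp : Continuous (Function.uncurry fun τ x => 2 * g τ x * G τ x) :=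
    (continuous_const.mul cg).mul cG
  have key : ∀ τ ∈ Ioo s t, ∀ n : ℕ, ∫ x in (-(n:ℝ))..n, 2 * g τ x * G τ x =
      -(∫ x in (-(n:ℝ))..n, (v τ x - v τ (x - a)) * (u τ x ^ 2 - u τ (x - a) ^ 2)) +
        (γ * (∫ y in (0:ℝ)..a, v τ (n - y)) ^ 2 - γ * (∫ y in (0:ℝ)..a, v τ (-n - y)) ^ 2) := by
    intro τ hτ n
    have hsl := h.sl τ (Ioo_subset_Icc_self hτ)
    have c1 : Continuous (fun x => 2 * g τ x * G τ x) :=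
      (continuous_const.mul (cgx τ)).mul (cGx τ)
    have c2 : Continuous (fun x => (v τ x - v τ (x - a)) * (u τ x ^ 2 - u τ (x - a) ^ 2)) :=
      (hsl.cv.sub (hsl.cv.comp (continuous_id.sub continuous_const))).mul
        ((hsl.cu.pow 2).sub ((hsl.cu.comp (continuous_id.sub continuous_const)).pow 2))
    have e : ∫ x in (-(n:ℝ))..n, (2 * g τ x * G τ x +
        (v τ x - v τ (x - a)) * (u τ x ^ 2 - u τ (x - a) ^ 2)) =
        (γ * (∫ y in (0:ℝ)..a, v τ (n - y)) ^ 2 - γ * (∫ y in (0:ℝ)..a, v τ (-n - y)) ^ 2) := by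
      apply intervalIntegral.integral_eq_sub_of_hasDerivAt
        (f := fun x => γ * (∫ y in (0:ℝ)..a, v τ (x - y)) ^ 2)
      · intro x _
        refine (((hsl.zder a x).fun_pow 2).const_mul γ).congr_deriv ?_
        rw [Gx τ hτ, gv τ (Ioo_subset_Icc_self hτ)]; push_cast; ring
      · exact (c1.add c2).intervalIntegrable _ _
    rw [intervalIntegral.integral_add (c1.intervalIntegrable _ _)
      (c2.intervalIntegrable _ _)] at e
    linarith
  have fx : ∀ τ ∈ Icc s t, (fun x => g τ x ^ 2) = fun x => (v τ x - v τ (x - a)) ^ 2 := by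
    intro τ hτ; funext x; rw [gv τ hτ]
  have B := flux (f := fun τ x => g τ x ^ 2)
    (l := fun τ => -∫ x, (v τ x - v τ (x - a)) * (u τ x ^ 2 - u τ (x - a) ^ 2))
    (C := ((C + C) * ∫ x, u s x ^ 2) + ((C + C) * ∫ x, u s x ^ 2)
      + (|γ| * (C * |a|) ^ 2 + |γ| * (C * |a|) ^ 2))
    h.hst hp ?_ ?_ ?_ ?_ ?_
  · rw [fx t ⟨h.hst, le_rfl⟩, fx s ⟨le_rfl, h.hst⟩] at B
    exact B
  · intro x
    symm
    apply intervalIntegral.integral_eq_sub_of_hasDerivAt_of_le h.hst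
      (f := fun τ => g τ x ^ 2)
    · exact ((cgτ x).pow 2).continuousOn
    · intro τ hτ
      simpa using (gder τ hτ x).fun_pow 2
    · exact ((continuous_const.mul (cgτ x)).mul (cGτ x)).intervalIntegrable _ _
  · intro τ hτ n
    have hsl := h.sl τ (Ioo_subset_Icc_self hτ)
    have hn : (-(n:ℝ)) ≤ n := by linarith [(Nat.cast_nonneg n : (0:ℝ) ≤ n)]
    have hC0 : 0 ≤ C := (abs_nonneg _).trans (h.bu τ hτ 0)
    rw [key τ hτ n]
    have b1 : ∀ x, |γ * (∫ y in (0:ℝ)..a, v τ (x - y)) ^ 2| ≤ |γ| * (C * |a|) ^ 2 := by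
      intro x
      rw [abs_mul, abs_pow]
      gcongr; exact hsl.zbd (h.bv τ hτ) a x
    refine (abs_add_le _ _).trans
      (add_le_add ?_ ((abs_sub _ _).trans (add_le_add (b1 _) (b1 _))))
    rw [abs_neg, ← (h.sub (Ioo_subset_Icc_self hτ)).Qconst]
    have i1 : Integrable (fun x => (C + C) * u τ x ^ 2) := hsl.iu2.const_mul _
    have i2 : Integrable (fun x => (C + C) * u τ (x - a) ^ 2) :=
      (hsl.iu2.comp_sub_right a).const_mul _
    have e2 : ∫ x, (C + C) * u τ (x - a) ^ 2 = (C + C) * ∫ x, u τ x ^ 2 := by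
      rw [MeasureTheory.integral_const_mul,
        integral_sub_right_eq_self (fun x => u τ x ^ 2) a]
    nth_rewrite 2 [← e2]
    rw [← MeasureTheory.integral_const_mul, ← integral_add i1 i2,
      intervalIntegral.integral_of_le hn, ← Real.norm_eq_abs]
    refine (MeasureTheory.norm_integral_le_of_norm_le (i1.add i2).integrableOn
      (Eventually.of_forall fun y => ?_)).trans
      (setIntegral_le_integral (i1.add i2) (Eventually.of_forall fun y => ?_))
    · simp only [Pi.add_apply]
      rw [Real.norm_eq_abs, abs_mul, ← mul_add]
      refine mul_le_mul ((abs_sub _ _).trans (add_le_add (h.bv τ hτ _) (h.bv τ hτ _)))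
        ((abs_sub _ _).trans ?_) (abs_nonneg _) (by positivity)
      rw [abs_of_nonneg (sq_nonneg _), abs_of_nonneg (sq_nonneg _)]
    · simp only [Pi.zero_apply, Pi.add_apply]; positivity
  · intro τ hτ
    simp only [key τ hτ]
    have hsl := h.sl τ (Ioo_subset_Icc_self hτ)
    have a1 := (intervalIntegral_tendsto_integral (hsl.rate a).1 natBot natTop).neg
    have z1 := hsl.zlim a (l := atTop) fun y =>
      hsl.vtop.comp (tendsto_atTop_add_const_right _ (-y) tendsto_id)
    have z2 := hsl.zlim a (l := atBot) fun y =>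
      hsl.vbot.comp (tendsto_atBot_add_const_right _ (-y) tendsto_id)
    have a2 := ((z1.comp natTop).pow 2).const_mul γ
    have a3 := ((z2.comp natBot).pow 2).const_mul γ
    simpa using a1.add (a2.sub a3)
  · show Integrable (fun x => g s x ^ 2)
    rw [fx s ⟨le_rfl, h.hst⟩]; exact hs.ishift a
  · show Integrable (fun x => g t x ^ 2)
    rw [fx t ⟨h.hst, le_rfl⟩]; exact ht.ishift a

lemma vsq (h : Strip γ s t C u ut ux v) :
    2 * (∫ x, v t x ^ 2) - 2 * (∫ x, v s x ^ 2) =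
      ∫ τ in s..t, -(2 * ∫ x, v τ x * u τ x ^ 2) := by
  have hs := h.sl s ⟨le_rfl, h.hst⟩
  have ht := h.sl t ⟨h.hst, le_rfl⟩
  refine tendsto_nhds_unique (ht.vshift.sub hs.vshift) ?_
  simp only [(h.win _).2]
  apply intervalIntegral.tendsto_integral_filter_of_dominated_convergence
    (fun _ => 2 * (C * ∫ x, u s x ^ 2) + (C + C) * ∫ x, u s x ^ 2)
  · exact Eventually.of_forall fun n => (h.win n).1
  · refine Eventually.of_forall fun n => ae_Ioo h.hst fun τ hτ => ?_
    have hsl := h.sl τ (Ioo_subset_Icc_self hτ)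
    rw [norm_neg, Real.norm_eq_abs, (hsl.rate n).2,
      ← (h.sub (Ioo_subset_Icc_self hτ)).Qconst]
    refine (abs_sub _ _).trans (add_le_add ?_ ?_)
    · rw [abs_mul, abs_two]
      exact mul_le_mul_of_nonneg_left (hsl.bbu2 (h.bv τ hτ)) (by norm_num)
    · exact hsl.bbu2 fun x => (abs_add_le _ _).trans (add_le_add (h.bv τ hτ _) (h.bv τ hτ _))
  · exact intervalIntegrable_const
  · refine ae_Ioo h.hst fun τ hτ => ?_
    have hsl := h.sl τ (Ioo_subset_Icc_self hτ)
    simp only [(hsl.rate _).2]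
    simpa using (hsl.rate_lim.const_sub (2 * ∫ x, v τ x * u τ x ^ 2)).neg

lemma Econst (h : Strip γ s t C u ut ux v) :
    γ * (∫ x, v t x ^ 2) + 1 / 3 * (∫ x, u t x ^ 3) =
      γ * (∫ x, v s x ^ 2) + 1 / 3 * (∫ x, u s x ^ 3) := by
  have h1 := h.cube
  have h2 := h.vsq
  rw [intervalIntegral.integral_const_mul] at h1
  rw [intervalIntegral.integral_neg, intervalIntegral.integral_const_mul] at h2
  linear_combination (γ / 2) * h2 + (1 / 3) * h1

end Strip

lemma conserve {γ s t C : ℝ} {u ut ux v : ℝ → ℝ → ℝ} (hst : s ≤ t)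
    (cu : ContinuousOn (Function.uncurry u) (Icc s t ×ˢ univ))
    (cut : ContinuousOn (Function.uncurry ut) (Icc s t ×ˢ univ))
    (hut : ∀ τ ∈ Ioo s t, ∀ x, HasDerivAt (fun σ => u σ x) (ut τ x) τ)
    (hux : ∀ τ ∈ Ioo s t, ∀ x, HasDerivAt (u τ) (ux τ x) x)
    (sl : ∀ τ ∈ Icc s t, Slice (u τ) (v τ))
    (pde : ∀ τ ∈ Ioo s t, ∀ x, ut τ x = γ * v τ x - u τ x * ux τ x)
    (bd : ∀ τ ∈ Ioo s t, ∀ x, |u τ x| ≤ C ∧ |v τ x| ≤ C) :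
    (∫ x, u t x ^ 2 = ∫ x, u s x ^ 2) ∧
    γ * (∫ x, v t x ^ 2) + 1 / 3 * (∫ x, u t x ^ 3) =
      γ * (∫ x, v s x ^ 2) + 1 / 3 * (∫ x, u s x ^ 3) := by
  let c : ℝ → ℝ := fun τ => (projIcc s t hst τ : ℝ)
  have hc : Continuous c := continuous_subtype_val.comp continuous_projIcc
  have hcm : ∀ τ, c τ ∈ Icc s t := fun τ => (projIcc s t hst τ).2
  have hce : ∀ τ ∈ Icc s t, c τ = τ := fun τ hτ => by
    simp only [c, projIcc_of_mem hst hτ]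
  have hcp : Continuous (fun p : ℝ × ℝ => (c p.1, p.2)) := by fun_prop
  have H : Strip γ s t C (fun τ => u (c τ)) (fun τ => ut (c τ)) ux v := by
    refine ⟨hst, ?_, ?_, ?_, ?_, ?_, ?_, ?_, ?_⟩
    · exact cu.comp_continuous hcp fun p => ⟨hcm _, mem_univ _⟩
    · exact cut.comp_continuous hcp fun p => ⟨hcm _, mem_univ _⟩
    · intro τ hτ x
      rw [hce τ (Ioo_subset_Icc_self hτ)]
      refine (hut τ hτ x).congr_of_eventuallyEq ?_
      filter_upwards [Icc_mem_nhds hτ.1 hτ.2] with σ hσ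
      rw [hce σ hσ]
    · intro τ hτ x
      simp only [hce τ (Ioo_subset_Icc_self hτ)]
      exact hux τ hτ x
    · intro τ hτ
      simp only [hce τ hτ]
      exact sl τ hτ
    · intro τ hτ x
      simp only [hce τ (Ioo_subset_Icc_self hτ)]
      exact pde τ hτ x
    · intro τ hτ x
      simp only [hce τ (Ioo_subset_Icc_self hτ)]
      exact (bd τ hτ x).1
    · intro τ hτ x
      exact (bd τ hτ x).2
  have h1 := H.Qconst
  have h2 := H.Econst
  simp only [hce t ⟨hst, le_rfl⟩, hce s ⟨le_rfl, hst⟩] at h1 h2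
  exact ⟨h1, h2⟩

lemma deriv_nonneg_of_left_max {f : ℝ → ℝ} {d s τ : ℝ} (hf : HasDerivAt f d τ) (hs : s < τ)
    (hm : ∀ σ ∈ Icc s τ, f σ ≤ f τ) : 0 ≤ d := by
  have h1 := (hasDerivWithinAt_iff_tendsto_slope' (s := Iio τ) (by simp)).1 hf.hasDerivWithinAt
  refine ge_of_tendsto h1 ?_
  filter_upwards [Ico_mem_nhdsLT hs] with σ hσ
  rw [slope_def_field]
  exact div_nonneg_of_nonpos (by linarith [hm σ ⟨hσ.1, hσ.2.le⟩]) (by linarith [hσ.2])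

lemma psi_der (x : ℝ) : HasDerivAt (fun x : ℝ => √(1 + x ^ 2)) (x / √(1 + x ^ 2)) x := by
  have h1 : HasDerivAt (fun x : ℝ => 1 + x ^ 2) (2 * x) x := by
    simpa using ((hasDerivAt_id x).fun_pow 2).const_add 1
  have h2 := h1.sqrt (by positivity)
  refine h2.congr_deriv ?_
  have : 0 < √(1 + x ^ 2) := by positivity
  field_simp

lemma abs_le_psi (x : ℝ) : |x| ≤ √(1 + x ^ 2) := Real.abs_le_sqrt (by linarith)

lemma psi_der_le (x : ℝ) : |x / √(1 + x ^ 2)| ≤ 1 := by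
  have : 0 < √(1 + x ^ 2) := by positivity
  rw [abs_div, abs_of_pos this, div_le_one this]
  exact abs_le_psi x

lemma transport {s t C0 C1 G m : ℝ} (hst : s ≤ t) {y yt yx a : ℝ → ℝ → ℝ}
    (cy : ContinuousOn (Function.uncurry y) (Icc s t ×ˢ univ))
    (hyt : ∀ τ ∈ Icc s t, ∀ x, HasDerivAt (fun σ => y σ x) (yt τ x) τ)
    (hyx : ∀ τ ∈ Icc s t, ∀ x, HasDerivAt (y τ) (yx τ x) x)
    (hin : ∀ τ ∈ Icc s t, ∀ x, yt τ x + a τ x * yx τ x ≤ G)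
    (ha : ∀ τ ∈ Icc s t, ∀ x, |a τ x| ≤ C0)
    (hb : ∀ τ ∈ Icc s t, ∀ x, y τ x ≤ C1)
    (hm : ∀ x, y s x ≤ m) (x₀ : ℝ) : y t x₀ ≤ m + G * (t - s) := by
  have hC0 : 0 ≤ C0 := (abs_nonneg _).trans (ha s ⟨le_rfl, hst⟩ 0)
  have key : ∀ ε > 0, y t x₀ ≤ m + G * (t - s) + ε * (√(1 + x₀ ^ 2) + (C0 + 1) * (t - s)) := by
    intro ε hε
    by_contra hcon
    push Not at hcon
    set κ := G + C0 * ε + ε with hκ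
    let z : ℝ × ℝ → ℝ := fun p => y p.1 p.2 - ε * √(1 + p.2 ^ 2) - κ * (p.1 - s)
    have hz0 : m < z (t, x₀) := by
      simp only [z, hκ]; linarith
    obtain ⟨R, hR⟩ : ∃ R : ℝ, |x₀| < R ∧ C1 + |κ| * (t - s) - z (t, x₀) < ε * R := by
      refine ⟨max (|x₀| + 1) ((C1 + |κ| * (t - s) - z (t, x₀)) / ε + 1), ?_, ?_⟩
      · exact lt_of_lt_of_le (by linarith) (le_max_left _ _)
      · have := le_max_right (|x₀| + 1) ((C1 + |κ| * (t - s) - z (t, x₀)) / ε + 1)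
        have h2 := mul_le_mul_of_nonneg_left this hε.le
        have h3 : ε * ((C1 + |κ| * (t - s) - z (t, x₀)) / ε + 1) =
          C1 + |κ| * (t - s) - z (t, x₀) + ε := by field_simp
        linarith
    have cz : ContinuousOn z (Icc s t ×ˢ Icc (-R) R) := by
      refine ((cy.mono (prod_mono le_rfl (subset_univ _))).sub ?_).sub ?_
      · exact Continuous.continuousOn (by fun_prop)
      · exact Continuous.continuousOn (by fun_prop)
    have hmem0 : ((t, x₀) : ℝ × ℝ) ∈ Icc s t ×ˢ Icc (-R) R :=
      ⟨⟨hst, le_rfl⟩, abs_le.1 hR.1.le⟩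
    obtain ⟨⟨τ, x⟩, ⟨hτ, hx⟩, hmax⟩ :=
      (isCompact_Icc.prod isCompact_Icc).exists_isMaxOn ⟨_, hmem0⟩ cz
    simp only at hτ hx
    have hge : z (t, x₀) ≤ z (τ, x) := hmax hmem0
    have hκτ : -κ * (τ - s) ≤ |κ| * (t - s) := by
      have h1 : -κ * (τ - s) ≤ |κ| * (τ - s) :=
        mul_le_mul_of_nonneg_right (neg_le_abs κ) (by linarith [hτ.1])
      have h2 : |κ| * (τ - s) ≤ |κ| * (t - s) :=
        mul_le_mul_of_nonneg_left (by linarith [hτ.2]) (abs_nonneg _)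
      linarith
    -- x is interior
    have hxR : |x| < R := by
      by_contra hc
      push Not at hc
      have h1 : ε * R ≤ ε * √(1 + x ^ 2) :=
        mul_le_mul_of_nonneg_left (hc.trans (abs_le_psi x)) hε.le
      have h2 := hb τ hτ x
      have h3 : z (τ, x) = y τ x - ε * √(1 + x ^ 2) - κ * (τ - s) := rfl
      linarith [hR.2]
    -- τ is not the initial time
    have hsτ : s < τ := by
      rcases hτ.1.lt_or_eq with h | h
      · exact h
      · exfalso
        have h3 : z (τ, x) = y τ x - ε * √(1 + x ^ 2) - κ * (τ - s) := rfl
        have h4 : 0 ≤ ε * √(1 + x ^ 2) := by positivity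
        rw [← h] at h3 hge
        have := hm x
        rw [sub_self, mul_zero] at h3
        linarith
    have dx : yx τ x = ε * (x / √(1 + x ^ 2)) := by
      have hd : HasDerivAt (fun ξ => z (τ, ξ)) (yx τ x - ε * (x / √(1 + x ^ 2))) x :=
        ((hyx τ hτ x).fun_sub ((psi_der x).const_mul ε)).sub_const (κ * (τ - s))
      have hloc : IsLocalMax (fun ξ => z (τ, ξ)) x := by
        have : Icc (-R) R ∈ nhds x := Icc_mem_nhds (abs_lt.1 hxR).1 (abs_lt.1 hxR).2
        filter_upwards [this] with ξ hξ
        exact hmax (show ((τ, ξ) : ℝ × ℝ) ∈ Icc s t ×ˢ Icc (-R) R from ⟨hτ, hξ⟩)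
      linarith [hloc.hasDerivAt_eq_zero hd]
    have dt : 0 ≤ yt τ x - κ := by
      have hd : HasDerivAt (fun σ => z (σ, x)) (yt τ x - κ) τ := by
        have := ((hyt τ hτ x).sub_const (ε * √(1 + x ^ 2))).fun_sub
          (((hasDerivAt_id τ).sub_const s).const_mul κ)
        simpa using this
      refine deriv_nonneg_of_left_max hd hsτ fun σ hσ => ?_
      exact hmax (show ((σ, x) : ℝ × ℝ) ∈ Icc s t ×ˢ Icc (-R) R from
        ⟨⟨hσ.1, hσ.2.trans hτ.2⟩, hx⟩)
    have h5 := hin τ hτ x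
    have h6 : |a τ x * yx τ x| ≤ C0 * ε := by
      rw [dx, abs_mul, abs_mul, abs_of_pos hε]
      have h7 : ε * |x / √(1 + x ^ 2)| ≤ ε := by
        simpa using mul_le_mul_of_nonneg_left (psi_der_le x) hε.le
      exact mul_le_mul (ha τ hτ x) h7 (by positivity) hC0
    have := (abs_le.1 h6).1
    linarith
  set D := √(1 + x₀ ^ 2) + (C0 + 1) * (t - s) with hD
  have hD0 : 0 < D := by
    have h1 : 0 < √(1 + x₀ ^ 2) := by positivity
    have h2 : 0 ≤ (C0 + 1) * (t - s) := mul_nonneg (by linarith) (by linarith)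
    linarith
  refine le_of_forall_pos_le_add fun δ hδ => ?_
  have := key (δ / D) (by positivity)
  rwa [div_mul_cancel₀ _ hD0.ne'] at this

lemma Slice.gv_le {u v : ℝ → ℝ} (h : Slice u v) {γ M q e : ℝ} (hγ : 0 < γ)
    (hM : ∀ x, |u x| ≤ M) (hq : ∫ x, u x ^ 2 ≤ q)
    (he : γ * (∫ x, v x ^ 2) + 1 / 3 * (∫ x, u x ^ 3) ≤ e) (x : ℝ) :
    γ * |v x| ≤ γ + e + γ * q + M * q / 3 := by
  have h1 := h.vsq_le x
  have h2 := (abs_le.1 (h.bbu2 hM)).1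
  have hM0 : 0 ≤ M := (abs_nonneg _).trans (hM 0)
  have h3 : ∀ x, u x * u x ^ 2 = u x ^ 3 := fun x => by ring
  simp only [h3] at h2
  have h4 : M * ∫ x, u x ^ 2 ≤ M * q := mul_le_mul_of_nonneg_left hq hM0
  have h5 : |v x| ≤ 1 + v x ^ 2 := by
    rw [← sq_abs]; nlinarith [sq_nonneg (|v x| - 1), abs_nonneg (v x)]
  have h6 := mul_le_mul_of_nonneg_left (h5.trans (add_le_add_right h1 1)) hγ.le
  have h7 : γ * ∫ x, u x ^ 2 ≤ γ * q := mul_le_mul_of_nonneg_left hq hγ.le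
  linarith

lemma Slice.rev {u v : ℝ → ℝ} (h : Slice u v) : Slice (fun x => u (-x)) (fun x => -v (-x)) where
  cu := h.cu.comp continuous_neg
  hv x := by
    have := ((h.hv (-x)).scomp x (hasDerivAt_neg x)).fun_neg
    simpa [Function.comp_def] using this
  utop := h.ubot.comp tendsto_neg_atTop_atBot
  ubot := h.utop.comp tendsto_neg_atBot_atTop
  vtop := by simpa using (h.vbot.comp tendsto_neg_atTop_atBot).neg
  vbot := by simpa using (h.vtop.comp tendsto_neg_atBot_atTop).neg
  iv := h.iv.comp_neg.neg
  iu2 := h.iu2.comp_neg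
  iv2 := by simpa using h.iv2.comp_neg

structure Sol (γ α β : ℝ) (u ut ux v : ℝ → ℝ → ℝ) : Prop where
  hγ : 0 < γ
  cu : ContinuousOn (Function.uncurry u) (Ioo α β ×ˢ univ)
  cut : ContinuousOn (Function.uncurry ut) (Ioo α β ×ˢ univ)
  cux : ContinuousOn (Function.uncurry ux) (Ioo α β ×ˢ univ)
  hut : ∀ τ ∈ Ioo α β, ∀ x, HasDerivAt (fun σ => u σ x) (ut τ x) τ
  hux : ∀ τ ∈ Ioo α β, ∀ x, HasDerivAt (u τ) (ux τ x) x
  sl : ∀ τ ∈ Ioo α β, Slice (u τ) (v τ)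
  pde : ∀ τ ∈ Ioo α β, ∀ x, ut τ x = γ * v τ x - u τ x * ux τ x

namespace Sol
variable {γ α β : ℝ} {u ut ux v : ℝ → ℝ → ℝ}

lemma rev (h : Sol γ α β u ut ux v) : Sol γ (-β) (-α) (fun t x => u (-t) (-x))
    (fun t x => -ut (-t) (-x)) (fun t x => -ux (-t) (-x)) (fun t x => -v (-t) (-x)) := by
  have hm : ∀ τ ∈ Ioo (-β) (-α), -τ ∈ Ioo α β := fun τ hτ =>
    ⟨by linarith [hτ.2], by linarith [hτ.1]⟩
  have hp : ContinuousOn (fun p : ℝ × ℝ => (-p.1, -p.2)) (Ioo (-β) (-α) ×ˢ univ) :=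
    Continuous.continuousOn (by fun_prop)
  have hmap : MapsTo (fun p : ℝ × ℝ => (-p.1, -p.2)) (Ioo (-β) (-α) ×ˢ univ)
    (Ioo α β ×ˢ univ) := fun p hp => ⟨hm _ hp.1, mem_univ _⟩
  refine ⟨h.hγ, h.cu.comp hp hmap, (h.cut.comp hp hmap).neg, (h.cux.comp hp hmap).neg,
    ?_, ?_, ?_, ?_⟩
  · intro τ hτ x
    have := (h.hut (-τ) (hm τ hτ) (-x)).scomp τ (hasDerivAt_neg τ)
    simpa [Function.comp_def] using this
  · intro τ hτ x
    have := (h.hux (-τ) (hm τ hτ) (-x)).scomp x (hasDerivAt_neg x)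
    simpa [Function.comp_def] using this
  · exact fun τ hτ => (h.sl _ (hm τ hτ)).rev
  · intro τ hτ x
    rw [h.pde _ (hm τ hτ)]; ring

lemma apriori (h : Sol γ α β u ut ux v) {s t C0 q e m : ℝ} (hs : α < s) (hst : s ≤ t) (ht : t < β)
    (bu : ∀ τ ∈ Icc s t, ∀ x, |u τ x| ≤ C0)
    (hq : ∀ τ ∈ Icc s t, ∫ x, u τ x ^ 2 ≤ q)
    (he : ∀ τ ∈ Icc s t, γ * (∫ x, v τ x ^ 2) + 1 / 3 * (∫ x, u τ x ^ 3) ≤ e) (he0 : 0 ≤ e)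
    (hm : ∀ x, |u s x| ≤ m) (hsmall : q * (t - s) ≤ 1) :
    ∀ τ ∈ Icc s t, ∀ x, |u τ x| ≤ 2 * (m + (γ + e + γ * q) * (t - s)) := by
  have hsub : Icc s t ⊆ Ioo α β := fun τ hτ => ⟨hs.trans_le hτ.1, hτ.2.trans_lt ht⟩
  have hγ := h.hγ
  have hm0 : 0 ≤ m := (abs_nonneg _).trans (hm 0)
  have hq0 : 0 ≤ q := (integral_nonneg fun x => sq_nonneg _).trans (hq s ⟨le_rfl, hst⟩)
  have step : ∀ M, (∀ τ ∈ Icc s t, ∀ x, |u τ x| ≤ M) → ∀ τ ∈ Icc s t, ∀ x,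
      |u τ x| ≤ m + (γ + e + γ * q) * (t - s) + M / 3 := by
    intro M hM τ hτ x
    have hM0 : 0 ≤ M := (abs_nonneg _).trans (hM s ⟨le_rfl, hst⟩ 0)
    have hsub' : Icc s τ ⊆ Icc s t := Icc_subset_Icc_right hτ.2
    set G := γ + e + γ * q + M * q / 3 with hG
    have hG0 : 0 ≤ G := by positivity
    have hv : ∀ σ ∈ Icc s t, ∀ x, |γ * v σ x| ≤ G := fun σ hσ x => by
      rw [abs_mul, abs_of_pos hγ]
      exact (h.sl σ (hsub hσ)).gv_le hγ (hM σ hσ) (hq σ hσ) (he σ hσ) x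
    have cu : ContinuousOn (Function.uncurry u) (Icc s τ ×ˢ univ) :=
      h.cu.mono (prod_mono (hsub'.trans hsub) le_rfl)
    have up : u τ x ≤ m + G * (τ - s) := by
      refine transport (C0 := M) (C1 := M) (a := u) hτ.1 cu
        (fun σ hσ x => h.hut σ (hsub (hsub' hσ)) x) (fun σ hσ x => h.hux σ (hsub (hsub' hσ)) x)
        (fun σ hσ x => ?_) (fun σ hσ x => hM σ (hsub' hσ) x)
        (fun σ hσ x => (le_abs_self _).trans (hM σ (hsub' hσ) x))
        (fun x => (le_abs_self _).trans (hm x)) x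
      rw [h.pde σ (hsub (hsub' hσ))]
      linarith [(abs_le.1 (hv σ (hsub' hσ) x)).2]
    have dn : -u τ x ≤ m + G * (τ - s) := by
      refine transport (C0 := M) (C1 := M) (a := u) (y := fun σ x => -u σ x)
        (yt := fun σ x => -ut σ x) (yx := fun σ x => -ux σ x) hτ.1 cu.neg
        (fun σ hσ x => (h.hut σ (hsub (hsub' hσ)) x).fun_neg)
        (fun σ hσ x => (h.hux σ (hsub (hsub' hσ)) x).fun_neg)
        (fun σ hσ x => ?_) (fun σ hσ x => hM σ (hsub' hσ) x)
        (fun σ hσ x => (neg_le_abs _).trans (hM σ (hsub' hσ) x))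
        (fun x => (neg_le_abs _).trans (hm x)) x
      rw [h.pde σ (hsub (hsub' hσ))]
      linarith [(abs_le.1 (hv σ (hsub' hσ) x)).1]
    have h1 : G * (τ - s) ≤ G * (t - s) := mul_le_mul_of_nonneg_left (by linarith [hτ.2]) hG0
    have h2 : G * (t - s) = (γ + e + γ * q) * (t - s) + M * (q * (t - s)) / 3 := by
      rw [hG]; ring
    have h3 : M * (q * (t - s)) ≤ M * 1 := mul_le_mul_of_nonneg_left hsmall hM0
    rw [abs_le]; constructor <;> linarith
  set S : Set ℝ := {r | ∃ τ ∈ Icc s t, ∃ x, r = |u τ x|} with hS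
  have hbdd : BddAbove S := ⟨C0, by rintro r ⟨τ, hτ, x, rfl⟩; exact bu τ hτ x⟩
  have hne : S.Nonempty := ⟨_, s, ⟨le_rfl, hst⟩, 0, rfl⟩
  have hle : ∀ τ ∈ Icc s t, ∀ x, |u τ x| ≤ sSup S := fun τ hτ x =>
    le_csSup hbdd ⟨τ, hτ, x, rfl⟩
  have h0 : sSup S ≤ m + (γ + e + γ * q) * (t - s) + sSup S / 3 := by
    apply csSup_le hne
    rintro r ⟨τ, hτ, x, rfl⟩
    exact step _ hle τ hτ x
  intro τ hτ x
  have := hle τ hτ x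
  have h5 : 0 ≤ (γ + e + γ * q) * (t - s) := mul_nonneg (by positivity) (by linarith)
  linarith

lemma apriori_back (h : Sol γ α β u ut ux v) {s t C0 q e m : ℝ} (hs : α < s) (hst : s ≤ t)
    (ht : t < β) (bu : ∀ τ ∈ Icc s t, ∀ x, |u τ x| ≤ C0)
    (hq : ∀ τ ∈ Icc s t, ∫ x, u τ x ^ 2 ≤ q)
    (he : ∀ τ ∈ Icc s t, γ * (∫ x, v τ x ^ 2) + 1 / 3 * (∫ x, u τ x ^ 3) ≤ e) (he0 : 0 ≤ e)
    (hm : ∀ x, |u t x| ≤ m) (hsmall : q * (t - s) ≤ 1) :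
    ∀ τ ∈ Icc s t, ∀ x, |u τ x| ≤ 2 * (m + (γ + e + γ * q) * (t - s)) := by
  have hmem : ∀ τ ∈ Icc (-t) (-s), -τ ∈ Icc s t := fun τ hτ =>
    ⟨by linarith [hτ.2], by linarith [hτ.1]⟩
  have H := h.rev.apriori (s := -t) (t := -s) (C0 := C0) (q := q) (e := e) (m := m)
    (by linarith) (by linarith) (by linarith) (fun τ hτ x => bu _ (hmem τ hτ) _)
    (fun τ hτ => ?_) (fun τ hτ => ?_) he0 (fun x => ?_) (by linarith)
  · intro τ hτ x
    have := H (-τ) ⟨by linarith [hτ.2], by linarith [hτ.1]⟩ (-x)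
    simp only [neg_neg] at this
    rwa [show -s - -t = t - s by ring] at this
  · rw [integral_neg_eq_self (fun x => u (-τ) x ^ 2)]
    exact hq _ (hmem τ hτ)
  · simp only [neg_sq]
    rw [integral_neg_eq_self (fun x => u (-τ) x ^ 3), integral_neg_eq_self (fun x => v (-τ) x ^ 2)]
    exact he _ (hmem τ hτ)
  · rw [neg_neg]; exact hm _

end Sol

/-- local boundedness in time -/
def LB (u v : ℝ → ℝ → ℝ) (τ : ℝ) : Prop :=
  ∃ U ∈ nhds τ, ∃ C : ℝ, ∀ σ ∈ U, ∀ x, |u σ x| ≤ C ∧ |v σ x| ≤ C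

lemma LB.isOpen (u v : ℝ → ℝ → ℝ) : IsOpen {τ | LB u v τ} := by
  rw [isOpen_iff_mem_nhds]
  rintro τ ⟨U, hU, C, hC⟩
  filter_upwards [eventually_mem_nhds_iff.2 hU] with σ hσ
  exact ⟨U, hσ, C, hC⟩

lemma LB.rev {u v : ℝ → ℝ → ℝ} {τ : ℝ} (h : LB u v (-τ)) :
    LB (fun t x => u (-t) (-x)) (fun t x => -v (-t) (-x)) τ := by
  obtain ⟨U, hU, C, hC⟩ := h
  refine ⟨(fun t => -t) ⁻¹' U, continuous_neg.continuousAt.preimage_mem_nhds hU, C,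
    fun σ hσ x => ?_⟩
  rw [abs_neg]
  exact hC _ hσ _

lemma LB.compact {u v : ℝ → ℝ → ℝ} {S : Set ℝ} (hS : IsCompact S) (h : ∀ τ ∈ S, LB u v τ) :
    ∃ C : ℝ, ∀ σ ∈ S, ∀ x, |u σ x| ≤ C ∧ |v σ x| ≤ C := by
  refine hS.induction_on (p := fun S => ∃ C : ℝ, ∀ σ ∈ S, ∀ x, |u σ x| ≤ C ∧ |v σ x| ≤ C)
    ⟨0, by simp⟩ ?_ ?_ ?_
  · rintro s t hst ⟨C, hC⟩
    exact ⟨C, fun σ hσ => hC σ (hst hσ)⟩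
  · rintro s t ⟨C, hC⟩ ⟨D, hD⟩
    refine ⟨max C D, ?_⟩
    rintro σ (hσ | hσ) x
    · exact ⟨(hC σ hσ x).1.trans (le_max_left _ _), (hC σ hσ x).2.trans (le_max_left _ _)⟩
    · exact ⟨(hD σ hσ x).1.trans (le_max_right _ _), (hD σ hσ x).2.trans (le_max_right _ _)⟩
  · intro τ hτ
    obtain ⟨U, hU, C, hC⟩ := h τ hτ
    exact ⟨U, mem_nhdsWithin_of_mem_nhds hU, C, hC⟩

namespace Sol
variable {γ α β : ℝ} {u ut ux v : ℝ → ℝ → ℝ}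

lemma cons (h : Sol γ α β u ut ux v) {s t C : ℝ} (hs : α < s) (hst : s ≤ t) (ht : t < β)
    (bd : ∀ τ ∈ Ioo s t, ∀ x, |u τ x| ≤ C ∧ |v τ x| ≤ C) :
    (∫ x, u t x ^ 2 = ∫ x, u s x ^ 2) ∧
    γ * (∫ x, v t x ^ 2) + 1 / 3 * (∫ x, u t x ^ 3) =
      γ * (∫ x, v s x ^ 2) + 1 / 3 * (∫ x, u s x ^ 3) := by
  have hsub : Icc s t ⊆ Ioo α β := fun τ hτ => ⟨hs.trans_le hτ.1, hτ.2.trans_lt ht⟩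
  have hsub' : Ioo s t ⊆ Ioo α β := Ioo_subset_Icc_self.trans hsub
  exact conserve hst (h.cu.mono (prod_mono hsub le_rfl)) (h.cut.mono (prod_mono hsub le_rfl))
    (fun τ hτ => h.hut τ (hsub' hτ)) (fun τ hτ => h.hux τ (hsub' hτ))
    (fun τ hτ => h.sl τ (hsub hτ)) (fun τ hτ => h.pde τ (hsub' hτ)) bd

lemma endpt (h : Sol γ α β u ut ux v) {a t : ℝ} (ha : α ≤ a) (hat : a < t) (ht : t < β)
    (hLB : ∀ τ ∈ Ioc a t, LB u v τ) :
    (∀ τ ∈ Ioc a t, (∫ x, u t x ^ 2 = ∫ x, u τ x ^ 2) ∧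
      γ * (∫ x, v t x ^ 2) + 1 / 3 * (∫ x, u t x ^ 3) =
        γ * (∫ x, v τ x ^ 2) + 1 / 3 * (∫ x, u τ x ^ 3)) ∧
    ∃ s₀ ∈ Ioo a t, ∃ C : ℝ, ∀ τ ∈ Ioc a s₀, ∀ x, |u τ x| ≤ C ∧ |v τ x| ≤ C := by
  have hγ := h.hγ
  have hcons : ∀ τ ∈ Ioc a t, (∫ x, u t x ^ 2 = ∫ x, u τ x ^ 2) ∧
      γ * (∫ x, v t x ^ 2) + 1 / 3 * (∫ x, u t x ^ 3) =
        γ * (∫ x, v τ x ^ 2) + 1 / 3 * (∫ x, u τ x ^ 3) := by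
    intro τ hτ
    obtain ⟨C, hC⟩ := LB.compact (S := Icc τ t) isCompact_Icc
      (fun σ hσ => hLB σ ⟨hτ.1.trans_le hσ.1, hσ.2⟩)
    exact h.cons (ha.trans_lt hτ.1) hτ.2 ht (fun σ hσ => hC σ (Ioo_subset_Icc_self hσ))
  refine ⟨hcons, ?_⟩
  set q := ∫ x, u t x ^ 2 with hq
  set e := |γ * (∫ x, v t x ^ 2) + 1 / 3 * (∫ x, u t x ^ 3)| with he
  have hq0 : 0 ≤ q := integral_nonneg fun x => sq_nonneg _
  have he0 : 0 ≤ e := abs_nonneg _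
  obtain ⟨s₀, hs₀, hsm⟩ : ∃ s₀ ∈ Ioo a t, q * (s₀ - a) ≤ 1 := by
    refine ⟨a + min ((t - a) / 2) (1 / (1 + q)), ⟨?_, ?_⟩, ?_⟩
    · have : 0 < min ((t - a) / 2) (1 / (1 + q)) := lt_min (by linarith) (by positivity)
      linarith
    · linarith [min_le_left ((t - a) / 2) (1 / (1 + q))]
    · have := mul_le_mul_of_nonneg_left (min_le_right ((t - a) / 2) (1 / (1 + q))) hq0
      have h2 : q * (1 / (1 + q)) ≤ 1 := by
        rw [mul_one_div, div_le_one (by linarith)]; linarith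
      linarith
  obtain ⟨m, hm⟩ := (h.sl s₀ ⟨ha.trans_lt hs₀.1, hs₀.2.trans ht⟩).bddu
  set M := 2 * (m + (γ + e + γ * q) * (s₀ - a)) with hM
  have hMb : ∀ τ ∈ Ioc a s₀, ∀ x, |u τ x| ≤ M := by
    intro τ hτ x
    have hsub : ∀ σ ∈ Icc τ s₀, σ ∈ Ioc a t := fun σ hσ =>
      ⟨hτ.1.trans_le hσ.1, hσ.2.trans hs₀.2.le⟩
    obtain ⟨C, hC⟩ := LB.compact (S := Icc τ s₀) isCompact_Icc (fun σ hσ => hLB σ (hsub σ hσ))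
    have := h.apriori_back (q := q) (e := e) (m := m) (ha.trans_lt hτ.1) hτ.2 (hs₀.2.trans ht)
      (fun σ hσ x => (hC σ hσ x).1) (fun σ hσ => (hcons σ (hsub σ hσ)).1.ge)
      (fun σ hσ => (hcons σ (hsub σ hσ)).2.ge.trans (le_abs_self _)) he0 hm
      ((mul_le_mul_of_nonneg_left (by linarith [hτ.1]) hq0).trans hsm) τ ⟨le_rfl, hτ.2⟩ x
    refine this.trans ?_
    have h3 : (γ + e + γ * q) * (s₀ - τ) ≤ (γ + e + γ * q) * (s₀ - a) :=
      mul_le_mul_of_nonneg_left (by linarith [hτ.1]) (by positivity)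
    linarith
  refine ⟨s₀, hs₀, max M ((γ + e + γ * q + M * q / 3) / γ), fun τ hτ x =>
    ⟨(hMb τ hτ x).trans (le_max_left _ _), le_trans ?_ (le_max_right _ _)⟩⟩
  have hτ' : τ ∈ Ioc a t := ⟨hτ.1, hτ.2.trans hs₀.2.le⟩
  rw [le_div_iff₀ hγ, mul_comm]
  exact (h.sl τ ⟨ha.trans_lt hτ.1, hτ'.2.trans_lt ht⟩).gv_le hγ (hMb τ hτ) (hcons τ hτ').1.ge
    ((hcons τ hτ').2.ge.trans (le_abs_self _)) x

lemma gap (h : Sol γ α β u ut ux v) {a t N : ℝ} (ha : α < a) (hat : a < t) (ht : t < β)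
    (hLB : ∀ τ ∈ Ioc a t, LB u v τ) (hu : ∀ x, |u a x| ≤ N) (hv : ∀ x, |v a x| ≤ N)
    (hQ : ∫ x, u a x ^ 2 ≤ N)
    (hV : ∫ x, v a x ^ 2 ≤ N) (h1 : t - a ≤ 1) (hN : N * (t - a) ≤ 1) (x : ℝ) :
    |u t x| ≤ 2 * (N + (γ + (γ * N + N * N / 3) + γ * N)) ∧
    |v t x| ≤ (γ + (γ * N + N * N / 3) + γ * N +
      2 * (N + (γ + (γ * N + N * N / 3) + γ * N)) * N / 3) / γ := by
  have hγ := h.hγ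
  obtain ⟨hc, s₀, hs₀, C, hC⟩ := h.endpt ha.le hat ht hLB
  have hN0 : 0 ≤ N := (abs_nonneg _).trans (hu 0)
  set e := γ * N + N * N / 3 with he
  have hsla := h.sl a ⟨ha, hat.trans ht⟩
  have hEa : γ * (∫ x, v a x ^ 2) + 1 / 3 * (∫ x, u a x ^ 3) ≤ e := by
    have h2 := (abs_le.1 (hsla.bbu2 hu)).2
    have h3 : ∀ x, u a x * u a x ^ 2 = u a x ^ 3 := fun x => by ring
    simp only [h3] at h2
    have h4 := mul_le_mul_of_nonneg_left hQ hN0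
    have h5 := mul_le_mul_of_nonneg_left hV hγ.le
    linarith
  have hca := h.cons ha hs₀.1.le (hs₀.2.trans ht) (fun τ hτ => hC τ (Ioo_subset_Ioc_self hτ))
  have hcs := hc s₀ ⟨hs₀.1, hs₀.2.le⟩
  obtain ⟨C', hC'⟩ := LB.compact (S := Icc s₀ t) isCompact_Icc
      (fun σ hσ => hLB σ ⟨hs₀.1.trans_le hσ.1, hσ.2⟩)
  have hQτ : ∀ τ ∈ Icc a t, ∫ x, u τ x ^ 2 ≤ N := by
    intro τ hτ
    rcases hτ.1.eq_or_lt with h' | h'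
    · rw [← h']; exact hQ
    · linarith [(hc τ ⟨h', hτ.2⟩).1]
  have hEτ : ∀ τ ∈ Icc a t, γ * (∫ x, v τ x ^ 2) + 1 / 3 * (∫ x, u τ x ^ 3) ≤ e := by
    intro τ hτ
    rcases hτ.1.eq_or_lt with h' | h'
    · rw [← h']; exact hEa
    · linarith [(hc τ ⟨h', hτ.2⟩).2]
  have hb : ∀ τ ∈ Icc a t, ∀ x, |u τ x| ≤ max N (max C C') := by
    intro τ hτ x
    rcases hτ.1.eq_or_lt with h' | h'
    · rw [← h']; exact (hu x).trans (le_max_left _ _)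
    · rcases le_total τ s₀ with h'' | h''
      · exact (hC τ ⟨h', h''⟩ x).1.trans ((le_max_left _ _).trans (le_max_right _ _))
      · exact (hC' τ ⟨h'', hτ.2⟩ x).1.trans ((le_max_right _ _).trans (le_max_right _ _))
  have he0 : 0 ≤ e := by positivity
  have hap := h.apriori ha hat.le ht hb hQτ hEτ he0 hu hN t ⟨hat.le, le_rfl⟩
  have hD : ∀ x, |u t x| ≤ 2 * (N + (γ + e + γ * N)) := fun x => by
    have h3 : (γ + e + γ * N) * (t - a) ≤ (γ + e + γ * N) * 1 :=
      mul_le_mul_of_nonneg_left h1 (by positivity)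
    linarith [hap x]
  refine ⟨hD x, ?_⟩
  rw [le_div_iff₀ hγ, mul_comm]
  exact (h.sl t ⟨ha.trans hat, ht⟩).gv_le hγ hD (hQτ t ⟨hat.le, le_rfl⟩) (hEτ t ⟨hat.le, le_rfl⟩) x

lemma gap_back (h : Sol γ α β u ut ux v) {a t N : ℝ} (ha : a < β) (hat : t < a) (ht : α < t)
    (hLB : ∀ τ ∈ Ico t a, LB u v τ) (hu : ∀ x, |u a x| ≤ N) (hv : ∀ x, |v a x| ≤ N)
    (hQ : ∫ x, u a x ^ 2 ≤ N)
    (hV : ∫ x, v a x ^ 2 ≤ N) (h1 : a - t ≤ 1) (hN : N * (a - t) ≤ 1) (x : ℝ) :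
    |u t x| ≤ 2 * (N + (γ + (γ * N + N * N / 3) + γ * N)) ∧
    |v t x| ≤ (γ + (γ * N + N * N / 3) + γ * N +
      2 * (N + (γ + (γ * N + N * N / 3) + γ * N)) * N / 3) / γ := by
  have := h.rev.gap (a := -a) (t := -t) (N := N) (by linarith) (by linarith) (by linarith)
    (fun τ hτ => LB.rev (hLB _ ⟨by linarith [hτ.2], by linarith [hτ.1]⟩))
    (fun x => by rw [neg_neg]; exact hu _) (fun x => by rw [neg_neg, abs_neg]; exact hv _)
    (by rw [neg_neg, integral_neg_eq_self (fun x => u a x ^ 2)]; exact hQ)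
    (by simp only [neg_neg, neg_sq]; rw [integral_neg_eq_self (fun x => v a x ^ 2)]; exact hV)
    (by linarith) (by linarith) (-x)
  simpa only [neg_neg, abs_neg] using this

end Sol

lemma le_whole {f : ℝ → ℝ} (hf : Integrable f) (h0 : ∀ x, 0 ≤ f x) (n : ℕ) :
    ∫ x in (-(n:ℝ))..n, f x ≤ ∫ x, f x := by
  have hn : (-(n:ℝ)) ≤ n := by linarith [(Nat.cast_nonneg n : (0:ℝ) ≤ n)]
  rw [intervalIntegral.integral_of_le hn]
  exact setIntegral_le_integral hf (Eventually.of_forall h0)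

lemma whole_le {f : ℝ → ℝ} (hf : Integrable f) {C : ℝ}
    (h : ∀ n : ℕ, ∫ x in (-(n:ℝ))..n, f x ≤ C) : ∫ x, f x ≤ C :=
  le_of_tendsto' (intervalIntegral_tendsto_integral hf
    (tendsto_neg_atTop_atBot.comp tendsto_natCast_atTop_atTop) tendsto_natCast_atTop_atTop) h

namespace Sol
variable {γ α β : ℝ} {u ut ux v : ℝ → ℝ → ℝ}

lemma all_LB (h : Sol γ α β u ut ux v) : ∀ τ ∈ Ioo α β, LB u v τ := by
  by_contra hcon
  push Not at hcon
  have hγ := h.hγ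
  set K : Set ℝ := Ioo α β ∩ {τ | LB u v τ}ᶜ with hK
  have hKl : IsLocallyClosed K :=
    isOpen_Ioo.isLocallyClosed.inter (LB.isOpen u v).isClosed_compl.isLocallyClosed
  have : LocallyCompactSpace K := hKl.locallyCompactSpace
  have : Nonempty K := by
    obtain ⟨τ, hτ, hτ'⟩ := hcon
    exact ⟨⟨τ, hτ, hτ'⟩⟩
  have hp : Continuous (fun p : K × ℝ => ((p.1 : ℝ), p.2)) := by fun_prop
  have hpm : ∀ p : K × ℝ, ((p.1 : ℝ), p.2) ∈ Ioo α β ×ˢ (univ : Set ℝ) := fun p =>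
    ⟨p.1.2.1, mem_univ _⟩
  have cu : Continuous (fun p : K × ℝ => u p.1 p.2) := h.cu.comp_continuous hp hpm
  have cut : Continuous (fun p : K × ℝ => ut p.1 p.2) := h.cut.comp_continuous hp hpm
  have cux : Continuous (fun p : K × ℝ => ux p.1 p.2) := h.cux.comp_continuous hp hpm
  have cv : Continuous (fun p : K × ℝ => v p.1 p.2) := by
    have e : (fun p : K × ℝ => v p.1 p.2) =
        fun p : K × ℝ => (ut p.1 p.2 + u p.1 p.2 * ux p.1 p.2) / γ := by
      funext p
      rw [h.pde _ p.1.2.1]; field_simp; ring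
    rw [e]
    exact (cut.add (cu.mul cux)).div_const γ
  let F : ℕ → Set K := fun n => {t | (∀ x, |u t x| ≤ n) ∧ (∀ x, |v t x| ≤ n) ∧
    (∀ R : ℕ, ∫ x in (-(R:ℝ))..R, u t x ^ 2 ≤ n) ∧
    (∀ R : ℕ, ∫ x in (-(R:ℝ))..R, v t x ^ 2 ≤ n)}
  have hF : ∀ n, IsClosed (F n) := by
    intro n
    have e : F n = (⋂ x, {t : K | |u t x| ≤ n}) ∩ ((⋂ x, {t : K | |v t x| ≤ n}) ∩
        ((⋂ R : ℕ, {t : K | ∫ x in (-(R:ℝ))..R, u t x ^ 2 ≤ n}) ∩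
          (⋂ R : ℕ, {t : K | ∫ x in (-(R:ℝ))..R, v t x ^ 2 ≤ n}))) := by
      ext t
      simp only [mem_inter_iff, mem_iInter]
      exact Iff.rfl
    rw [e]
    refine IsClosed.inter ?_ (IsClosed.inter ?_ (IsClosed.inter ?_ ?_))
    · exact isClosed_iInter fun x => isClosed_le
        ((cu.comp (Continuous.prodMk_left x)).abs) continuous_const
    · exact isClosed_iInter fun x => isClosed_le
        ((cv.comp (Continuous.prodMk_left x)).abs) continuous_const
    · refine isClosed_iInter fun R => isClosed_le ?_ continuous_const
      exact intervalIntegral.continuous_parametric_intervalIntegral_of_continuous'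
        (f := fun (t : K) x => u t x ^ 2) (cu.fun_pow 2) _ _
    · refine isClosed_iInter fun R => isClosed_le ?_ continuous_const
      exact intervalIntegral.continuous_parametric_intervalIntegral_of_continuous'
        (f := fun (t : K) x => v t x ^ 2) (cv.fun_pow 2) _ _
  have hcov : ⋃ n, F n = univ := by
    rw [eq_univ_iff_forall]
    intro t
    have sl := h.sl t t.2.1
    obtain ⟨A, hA⟩ := sl.bddu
    obtain ⟨B, hB⟩ := sl.bddv
    obtain ⟨n, hn⟩ := exists_nat_ge (max (max A B) (max (∫ x, u t x ^ 2) (∫ x, v t x ^ 2)))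
    rw [max_le_iff, max_le_iff, max_le_iff] at hn
    refine mem_iUnion.2 ⟨n, fun x => (hA x).trans hn.1.1, fun x => (hB x).trans hn.1.2,
      fun R => (le_whole sl.iu2 (fun x => sq_nonneg _) R).trans hn.2.1,
      fun R => (le_whole sl.iv2 (fun x => sq_nonneg _) R).trans hn.2.2⟩
  obtain ⟨n, t₀, ht₀⟩ := nonempty_interior_of_iUnion_of_closed hF hcov
  obtain ⟨δ, hδ, hball⟩ := Metric.isOpen_iff.1 isOpen_interior t₀ ht₀
  have hIoo : Ioo α β ∈ nhds (t₀ : ℝ) := Ioo_mem_nhds t₀.2.1.1 t₀.2.1.2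
  obtain ⟨δ', hδ', hball'⟩ := Metric.mem_nhds_iff.1 hIoo
  set N : ℝ := (n : ℝ) with hN
  have hN0 : 0 ≤ N := Nat.cast_nonneg n
  obtain ⟨ε, hε, hε1, hε2, hε3, hε4⟩ : ∃ ε > 0, ε ≤ δ ∧ ε ≤ δ' ∧ ε ≤ 1 ∧ N * ε ≤ 1 := by
    refine ⟨min (min δ δ') (1 / (1 + N)), lt_min (lt_min hδ hδ') (by positivity),
      (min_le_left _ _).trans (min_le_left _ _), (min_le_left _ _).trans (min_le_right _ _),
      (min_le_right _ _).trans ?_, ?_⟩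
    · rw [div_le_one (by positivity)]; linarith
    · have := mul_le_mul_of_nonneg_left (min_le_right (min δ δ') (1 / (1 + N))) hN0
      have h2 : N * (1 / (1 + N)) ≤ 1 := by
        rw [mul_one_div, div_le_one (by linarith)]; linarith
      linarith
  have hKF : ∀ t ∈ K, |t - t₀| < ε → (∀ x, |u t x| ≤ N) ∧ (∀ x, |v t x| ≤ N) ∧
      (∫ x, u t x ^ 2 ≤ N) ∧ (∫ x, v t x ^ 2 ≤ N) := by
    intro t ht htε
    have hm : (⟨t, ht⟩ : K) ∈ F n := interior_subset (hball (by
      rw [Metric.mem_ball, Subtype.dist_eq, Real.dist_eq]; exact htε.trans_le hε1))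
    have sl := h.sl t ht.1
    exact ⟨hm.1, hm.2.1, whole_le sl.iu2 hm.2.2.1, whole_le sl.iv2 hm.2.2.2⟩
  have hin : ∀ t : ℝ, |t - t₀| < ε → t ∈ Ioo α β := fun t ht =>
    hball' (by rw [Metric.mem_ball, Real.dist_eq]; exact ht.trans_le hε2)
  refine t₀.2.2 ?_
  set D1 := 2 * (N + (γ + (γ * N + N * N / 3) + γ * N)) with hD1
  set D2 := (γ + (γ * N + N * N / 3) + γ * N +
      2 * (N + (γ + (γ * N + N * N / 3) + γ * N)) * N / 3) / γ with hD2
  refine ⟨Ioo (t₀ - ε) (t₀ + ε), Ioo_mem_nhds (by linarith) (by linarith), max N (max D1 D2),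
    fun t ht x => ?_⟩
  have htε : |t - t₀| < ε := by rw [abs_lt]; constructor <;> linarith [ht.1, ht.2]
  suffices hs : (|u t x| ≤ N ∧ |v t x| ≤ N) ∨ (|u t x| ≤ D1 ∧ |v t x| ≤ D2) by
    rcases hs with hs | hs
    · exact ⟨hs.1.trans (le_max_left _ _), hs.2.trans (le_max_left _ _)⟩
    · exact ⟨hs.1.trans ((le_max_left _ _).trans (le_max_right _ _)),
        hs.2.trans ((le_max_right _ _).trans (le_max_right _ _))⟩
  by_cases htK : t ∈ K
  · exact Or.inl ⟨(hKF t htK htε).1 x, (hKF t htK htε).2.1 x⟩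
  right
  have hc : IsClosed ({τ | LB u v τ}ᶜ) := (LB.isOpen u v).isClosed_compl
  rcases lt_trichotomy (t₀ : ℝ) t with hlt | heq | hgt
  · have hcpt : IsCompact (Icc (t₀ : ℝ) t ∩ {τ | LB u v τ}ᶜ) := isCompact_Icc.inter_right hc
    have hmem := hcpt.sSup_mem ⟨t₀, ⟨le_rfl, hlt.le⟩, t₀.2.2⟩
    set a := sSup (Icc (t₀ : ℝ) t ∩ {τ | LB u v τ}ᶜ) with ha
    have haε : |a - t₀| < ε := by
      rw [abs_lt]; constructor <;> linarith [hmem.1.1, hmem.1.2, ht.2]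
    have haK : a ∈ K := ⟨hin a haε, hmem.2⟩
    have hat : a < t := lt_of_le_of_ne hmem.1.2 fun e => htK (e ▸ haK)
    have hLB : ∀ τ ∈ Ioc a t, LB u v τ := by
      intro τ hτ
      by_contra hn
      have : τ ≤ a := le_csSup hcpt.bddAbove ⟨⟨hmem.1.1.trans hτ.1.le, hτ.2⟩, hn⟩
      linarith [hτ.1]
    obtain ⟨b1, b2, b3, b4⟩ := hKF a haK haε
    refine h.gap haK.1.1 hat (hin t htε).2 hLB b1 b2 b3 b4 ?_ ?_ x
    · linarith [hmem.1.1, ht.2]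
    · exact (mul_le_mul_of_nonneg_left (by linarith [hmem.1.1, ht.2]) hN0).trans hε4
  · exact absurd (heq ▸ t₀.2) htK
  · have hcpt : IsCompact (Icc t (t₀ : ℝ) ∩ {τ | LB u v τ}ᶜ) := isCompact_Icc.inter_right hc
    have hmem := hcpt.sInf_mem ⟨t₀, ⟨hgt.le, le_rfl⟩, t₀.2.2⟩
    set a := sInf (Icc t (t₀ : ℝ) ∩ {τ | LB u v τ}ᶜ) with ha
    have haε : |a - t₀| < ε := by
      rw [abs_lt]; constructor <;> linarith [hmem.1.1, hmem.1.2, ht.1]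
    have haK : a ∈ K := ⟨hin a haε, hmem.2⟩
    have hat : t < a := lt_of_le_of_ne hmem.1.1 fun e => htK (e ▸ haK)
    have hLB : ∀ τ ∈ Ico t a, LB u v τ := by
      intro τ hτ
      by_contra hn
      have : a ≤ τ := csInf_le hcpt.bddBelow ⟨⟨hτ.1, hτ.2.le.trans hmem.1.2⟩, hn⟩
      linarith [hτ.2]
    obtain ⟨b1, b2, b3, b4⟩ := hKF a haK haε
    refine h.gap_back haK.1.2 hat (hin t htε).1 hLB b1 b2 b3 b4 ?_ ?_ x
    · linarith [hmem.1.2, ht.1]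
    · exact (mul_le_mul_of_nonneg_left (by linarith [hmem.1.2, ht.1]) hN0).trans hε4

end Sol
lemma prim {f : ℝ → ℝ} (hf : Integrable f) (hc : Continuous f) (x : ℝ) :
    HasDerivAt (fun x => ∫ y in Iic x, f y) (f x) x := by
  have e : (fun x => ∫ y in Iic x, f y) = fun x => (∫ y in Iic (0:ℝ), f y) + ∫ y in (0:ℝ)..x, f y := by
    funext x
    rw [← intervalIntegral.integral_Iic_sub_Iic hf.integrableOn hf.integrableOn]; ring
  rw [e]
  exact (hc.integral_hasStrictDerivAt 0 x).hasDerivAt.const_add _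
end OHLine

/-- conservation of `Q = ∫ u²` and `E = ∫ (γ v² + u³/3)` for a decaying
classical solution on the line, where `v(t,x) = ∫_{-∞}^x u(t,y) dy`. -/
theorem line_conserved_quantities
    (γ T : ℝ) (hγ : 0 < γ) (hT : 0 < T) (u₀ : ℝ → ℝ) (u : ℝ → ℝ → ℝ)
    (hsol : IsLineOHSolution γ (Set.Ico 0 T) u) (h0 : u 0 = u₀)
    (hudecay : ∀ t ∈ Set.Ico (0 : ℝ) T,
      Filter.Tendsto (u t) Filter.atTop (nhds 0) ∧
      Filter.Tendsto (u t) Filter.atBot (nhds 0))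
    (hvdecay : ∀ t ∈ Set.Ico (0 : ℝ) T,
      Filter.Tendsto (fun x => ∫ y in Set.Iic x, u t y) Filter.atTop (nhds 0) ∧
      Filter.Tendsto (fun x => ∫ y in Set.Iic x, u t y) Filter.atBot (nhds 0))
    (hvint : ∀ t ∈ Set.Ico (0 : ℝ) T,
      MeasureTheory.Integrable (fun x => ∫ y in Set.Iic x, u t y))
    (hwdecay : ∀ t ∈ Set.Ico (0 : ℝ) T,
      Filter.Tendsto (fun x => ∫ y in Set.Iic x, (∫ z in Set.Iic y, u t z))
        Filter.atTop (nhds 0) ∧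
      Filter.Tendsto (fun x => ∫ y in Set.Iic x, (∫ z in Set.Iic y, u t z))
        Filter.atBot (nhds 0))
    (huL2 : ∀ t ∈ Set.Ico (0 : ℝ) T, MeasureTheory.Integrable (fun x => (u t x) ^ 2))
    (hvL2 : ∀ t ∈ Set.Ico (0 : ℝ) T,
      MeasureTheory.Integrable (fun x => (∫ y in Set.Iic x, u t y) ^ 2)) :
    ∀ t ∈ Set.Ico (0 : ℝ) T,
      (∫ x : ℝ, (u t x) ^ 2) = (∫ x : ℝ, (u₀ x) ^ 2) ∧
      (∫ x : ℝ, (γ * (∫ y in Set.Iic x, u t y) ^ 2 + (1/3) * (u t x) ^ 3))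
        = ∫ x : ℝ, (γ * (∫ y in Set.Iic x, u₀ y) ^ 2 + (1/3) * (u₀ x) ^ 3) := by
  have sl : ∀ t ∈ Set.Ico (0 : ℝ) T, OHLine.Slice (u t) (fun x => ∫ y in Set.Iic x, u t y) := by
    intro t ht
    have hc : Continuous (u t) :=
      continuous_iff_continuousAt.2 fun x => (hsol.diff_x t ht x).continuousAt
    exact ⟨hc, OHLine.prim (hsol.integrable t ht) hc, (hudecay t ht).1, (hudecay t ht).2,
      (hvdecay t ht).1, (hvdecay t ht).2, hvint t ht, huL2 t ht, hvL2 t ht⟩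
  have hsub : Ioo (0 : ℝ) T ⊆ Ico 0 T := Ioo_subset_Ico_self
  have pde : ∀ τ ∈ Ioo (0 : ℝ) T, ∀ x, deriv (fun s => u s x) τ =
      γ * (∫ y in Set.Iic x, u τ y) - u τ x * deriv (u τ) x := fun τ hτ x => by
    linarith [hsol.eqn τ (hsub hτ) hτ.1 x]
  have hut : ∀ τ ∈ Ioo (0 : ℝ) T, ∀ x,
      HasDerivAt (fun σ => u σ x) (deriv (fun s => u s x) τ) τ := fun τ hτ x =>
    (hsol.diff_t τ (hsub hτ) x).hasDerivAt
  have hux : ∀ τ ∈ Ioo (0 : ℝ) T, ∀ x, HasDerivAt (u τ) (deriv (u τ) x) x := fun τ hτ x =>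
    (hsol.diff_x τ (hsub hτ) x).hasDerivAt
  have S : OHLine.Sol γ 0 T u (fun t x => deriv (fun s => u s x) t) (fun t x => deriv (u t) x)
      (fun t x => ∫ y in Set.Iic x, u t y) :=
    ⟨hγ, hsol.cont_u.mono (prod_mono hsub le_rfl), hsol.cont_ut.mono (prod_mono hsub le_rfl),
      hsol.cont_ux.mono (prod_mono hsub le_rfl), hut, hux, fun τ hτ => sl τ (hsub hτ), pde⟩
  have hsplit : ∀ t ∈ Set.Ico (0 : ℝ) T,
      (∫ x : ℝ, (γ * (∫ y in Set.Iic x, u t y) ^ 2 + (1/3) * (u t x) ^ 3)) =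
      γ * (∫ x, (∫ y in Set.Iic x, u t y) ^ 2) + 1 / 3 * ∫ x, u t x ^ 3 := by
    intro t ht
    rw [MeasureTheory.integral_add ((sl t ht).iv2.const_mul γ) ((sl t ht).iu3.const_mul (1/3)),
      MeasureTheory.integral_const_mul, MeasureTheory.integral_const_mul]
  intro t ht
  subst h0
  rcases ht.1.eq_or_lt with h' | h'
  · rw [← h']; exact ⟨rfl, rfl⟩
  obtain ⟨hc, s, hs, C, hC⟩ := S.endpt le_rfl h' ht.2
    (fun τ hτ => S.all_LB τ ⟨hτ.1, hτ.2.trans_lt ht.2⟩)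
  have hIcc : Icc 0 s ⊆ Ico 0 T := fun τ hτ => ⟨hτ.1, (hτ.2.trans hs.2.le).trans_lt ht.2⟩
  have hIoo : Ioo 0 s ⊆ Ioo 0 T := fun τ hτ => ⟨hτ.1, (hτ.2.trans hs.2).trans ht.2⟩
  have h2 := OHLine.conserve (γ := γ) (C := C) (u := u)
    (ut := fun t x => deriv (fun s => u s x) t)
    (ux := fun t x => deriv (u t) x) (v := fun t x => ∫ y in Set.Iic x, u t y) hs.1.le
    (hsol.cont_u.mono (prod_mono hIcc le_rfl)) (hsol.cont_ut.mono (prod_mono hIcc le_rfl))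
    (fun τ hτ => hut τ (hIoo hτ)) (fun τ hτ => hux τ (hIoo hτ))
    (fun τ hτ => sl τ (hIcc hτ)) (fun τ hτ => pde τ (hIoo hτ))
    (fun τ hτ => hC τ (Ioo_subset_Ioc_self hτ))
  have h1 := hc s ⟨hs.1, hs.2.le⟩
  rw [hsplit t ht, hsplit 0 ⟨le_rfl, hT⟩]
  exact ⟨h1.1.trans h2.1, h1.2.trans h2.2⟩
end
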